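/- arXiv:1805.07723 — 6 statements merged into one kernel-verified Lean document; each statement's English description precedes it below -/
import Mathlib

section
/- For any probability measures P and Q on a measurable space with P absolutely continuous with respect to Q, and any c ∈ [0,1], the c-primitive f-divergence satisfies I_{f_c}(P,Q) = (1/2)·∫|c·dP − (1−c)·dQ| − (1/2)·|1 − 2c|, where ∫|c·dP − (1−c)·dQ| denotes the total variation distance between the (sub)measures cP and (1−c)Q. -/
open MeasureTheory

/-- The `c`-primitive `f`-divergence `I_{f_c}(P,Q) = ∫ f_c(dP/dQ) dQ`, where
`f_c(t) = min(1-c, c) - min(1-c, c*t)`. -/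
noncomputable def Ifc {Ω : Type*} [MeasurableSpace Ω] (c : ℝ) (P Q : Measure Ω) : ℝ :=
  ∫ x, (min (1 - c) c - min (1 - c) (c * ((P.rnDeriv Q) x).toReal)) ∂Q

/-!
If `P` and `Q` have densities `p` and `q` with respect to `μ`, then `dP/dQ = p/q` holds `Q`-almost
everywhere, so that `∫ min(a, b dP/dQ) dQ` becomes `∫ min(a q, b p) dμ`, up to the contribution of
`{q = 0}`, which carries the singular part of `P`. The identity `2 min(u, v) = u + v - |u - v|`
then produces the total variation, and applied to `u = 1 - c`, `v = c` it produces `|1 - 2c|`.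
-/

open scoped ENNReal

section ENNRealDensities

variable {Ω : Type*} [MeasurableSpace Ω] {μ : Measure Ω} {f g : Ω → ℝ≥0∞}

lemma restrict_zeros_mutuallySingular_withDensity (ν : Measure Ω) (hg : Measurable g) :
    ν.restrict {x | g x = 0} ⟂ₘ μ.withDensity g := by
  have hZ : MeasurableSet {x | g x = 0} := hg (measurableSet_singleton 0)
  refine ⟨{x | g x = 0}ᶜ, hZ.compl, ?_, ?_⟩
  · rw [Measure.restrict_apply hZ.compl, Set.compl_inter_self, measure_empty]
  · rw [compl_compl, withDensity_apply _ hZ]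
    exact setLIntegral_eq_zero hZ fun _ hx ↦ hx

lemma withDensity_eq_restrict_zeros_add_withDensity_div (hf : Measurable f) (hg : Measurable g)
    (hg_top : ∀ᵐ x ∂μ, g x ≠ ∞) :
    μ.withDensity f =
      (μ.withDensity f).restrict {x | g x = 0} + (μ.withDensity g).withDensity (f / g) := by
  have hZ : MeasurableSet {x | g x = 0} := hg (measurableSet_singleton 0)
  have hcompl : {x | g x = 0}ᶜ.indicator f =ᵐ[μ] g * (f / g) := by
    filter_upwards [hg_top] with x hx_top
    by_cases hx : g x = 0
    · simp [hx]
    · simp [hx, ENNReal.mul_div_cancel hx hx_top]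
  rw [← withDensity_mul μ hg (hf.div hg), ← withDensity_congr_ae hcompl,
    withDensity_indicator hZ.compl, ← restrict_withDensity hZ.compl,
    Measure.restrict_add_restrict_compl hZ]

lemma rnDeriv_withDensity_withDensity [SigmaFinite (μ.withDensity g)] (hf : Measurable f)
    (hg : Measurable g) (hg_top : ∀ᵐ x ∂μ, g x ≠ ∞) :
    (μ.withDensity f).rnDeriv (μ.withDensity g) =ᵐ[μ.withDensity g] f / g :=
  (Measure.eq_rnDeriv (hf.div hg) (restrict_zeros_mutuallySingular_withDensity _ hg)
    (withDensity_eq_restrict_zeros_add_withDensity_div hf hg hg_top)).symm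

lemma singularPart_withDensity_withDensity (hf : Measurable f) (hg : Measurable g)
    (hg_top : ∀ᵐ x ∂μ, g x ≠ ∞) :
    (μ.withDensity f).singularPart (μ.withDensity g) =
      (μ.withDensity f).restrict {x | g x = 0} :=
  (Measure.eq_singularPart (hf.div hg) (restrict_zeros_mutuallySingular_withDensity _ hg)
    (withDensity_eq_restrict_zeros_add_withDensity_div hf hg hg_top)).symm

end ENNRealDensities

section OrderedField

variable {K : Type*} [Field K] [LinearOrder K] [IsStrictOrderedRing K]

lemma min_eq_half_add_sub_abs (u v : K) : min u v = (u + v - |u - v|) / 2 := by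
  linarith [min_add_max u v, max_sub_min_eq_abs' u v]

/-- On `q = 0` the division returns `0`, so the left side vanishes and the correction term
cancels `min 0 (b * p)`. -/
lemma mul_min_mul_div {p q : K} (a b : K) (hp : 0 ≤ p) (hq : 0 ≤ q) :
    q * min a (b * (p / q)) = min (a * q) (b * p) - if q = 0 then min 0 b * p else 0 := by
  split_ifs with hq0
  · simp [hq0, min_mul_of_nonneg _ _ hp]
  · rw [mul_min_of_nonneg _ _ hq, sub_zero, mul_comm q a, mul_left_comm, mul_div_cancel₀ _ hq0]

end OrderedField

section RealDensities

variable {Ω : Type*} [MeasurableSpace Ω] {P Q μ : Measure Ω} {p q : Ω → ℝ}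

lemma integrable_of_eq_withDensity_ofReal [IsFiniteMeasure P] (hp : Measurable p)
    (hp0 : ∀ x, 0 ≤ p x) (hP : P = μ.withDensity (fun x => ENNReal.ofReal (p x))) :
    Integrable p μ := by
  rw [← lintegral_ofReal_ne_top_iff_integrable hp.aestronglyMeasurable (.of_forall hp0),
    ← setLIntegral_univ, ← withDensity_apply _ .univ, ← hP]
  exact measure_ne_top P _

lemma measureReal_withDensity_ofReal (hp : Measurable p) (hp0 : ∀ x, 0 ≤ p x) {s : Set Ω}
    (hs : MeasurableSet s) :
    (μ.withDensity fun x => ENNReal.ofReal (p x)).real s = ∫ x in s, p x ∂μ := by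
  rw [integral_eq_lintegral_of_nonneg_ae (.of_forall hp0) hp.aestronglyMeasurable,
    measureReal_def, withDensity_apply _ hs]

lemma integral_withDensity_ofReal (hq : Measurable q) (hq0 : ∀ x, 0 ≤ q x) (f : Ω → ℝ) :
    ∫ x, f x ∂(μ.withDensity fun x => ENNReal.ofReal (q x)) = ∫ x, q x * f x ∂μ := by
  rw [integral_withDensity_eq_integral_toReal_smul hq.ennreal_ofReal
    (.of_forall fun _ ↦ ENNReal.ofReal_lt_top)]
  simp only [ENNReal.toReal_ofReal (hq0 _), smul_eq_mul]

lemma toReal_rnDeriv_ae_eq_div [SigmaFinite Q] (hp : Measurable p) (hq : Measurable q)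
    (hp0 : ∀ x, 0 ≤ p x) (hq0 : ∀ x, 0 ≤ q x)
    (hP : P = μ.withDensity (fun x => ENNReal.ofReal (p x)))
    (hQ : Q = μ.withDensity (fun x => ENNReal.ofReal (q x))) :
    (fun x => (P.rnDeriv Q x).toReal) =ᵐ[Q] fun x => p x / q x := by
  subst hP hQ
  filter_upwards [rnDeriv_withDensity_withDensity hp.ennreal_ofReal hq.ennreal_ofReal
    (.of_forall fun _ ↦ ENNReal.ofReal_ne_top)] with x hx
  rw [hx, Pi.div_apply, ENNReal.toReal_div, ENNReal.toReal_ofReal (hp0 x),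
    ENNReal.toReal_ofReal (hq0 x)]

lemma measureReal_univ_singularPart_eq_setIntegral (hp : Measurable p) (hq : Measurable q)
    (hp0 : ∀ x, 0 ≤ p x) (hq0 : ∀ x, 0 ≤ q x)
    (hP : P = μ.withDensity (fun x => ENNReal.ofReal (p x)))
    (hQ : Q = μ.withDensity (fun x => ENNReal.ofReal (q x))) :
    (P.singularPart Q).real Set.univ = ∫ x in {x | q x = 0}, p x ∂μ := by
  have hZ : MeasurableSet {x | q x = 0} := hq (measurableSet_singleton 0)
  have hzeros : {x | ENNReal.ofReal (q x) = 0} = {x | q x = 0} := by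
    ext x
    exact ENNReal.ofReal_eq_zero.trans (hq0 x).ge_iff_eq'
  subst hP hQ
  rw [singularPart_withDensity_withDensity hp.ennreal_ofReal hq.ennreal_ofReal
    (.of_forall fun _ ↦ ENNReal.ofReal_ne_top), hzeros, measureReal_restrict_apply_univ,
    measureReal_withDensity_ofReal hp hp0 hZ]

lemma integral_min_mul_mul (hp : Integrable p μ) (hq : Integrable q μ) (a b : ℝ) :
    ∫ x, min (a * q x) (b * p x) ∂μ =
      (a * (∫ x, q x ∂μ) + b * (∫ x, p x ∂μ) - ∫ x, |a * q x - b * p x| ∂μ) / 2 := by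
  have haq := hq.const_mul a
  have hbp := hp.const_mul b
  have habs : Integrable (fun x => |a * q x - b * p x|) μ := (haq.sub hbp).abs
  simp only [min_eq_half_add_sub_abs]
  rw [integral_div, integral_sub (by fun_prop) habs, integral_add haq hbp,
    integral_const_mul, integral_const_mul]

lemma integral_min_mul_rnDeriv_eq_sub_singularPart [IsFiniteMeasure P] [IsFiniteMeasure Q]
    (hp : Measurable p) (hq : Measurable q) (hp0 : ∀ x, 0 ≤ p x) (hq0 : ∀ x, 0 ≤ q x)
    (hP : P = μ.withDensity (fun x => ENNReal.ofReal (p x)))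
    (hQ : Q = μ.withDensity (fun x => ENNReal.ofReal (q x))) (a b : ℝ) :
    ∫ x, min a (b * (P.rnDeriv Q x).toReal) ∂Q =
      (∫ x, min (a * q x) (b * p x) ∂μ) - min 0 b * (P.singularPart Q).real Set.univ := by
  have hpi := integrable_of_eq_withDensity_ofReal hp hp0 hP
  have hqi := integrable_of_eq_withDensity_ofReal hq hq0 hQ
  have hZ : MeasurableSet {x | q x = 0} := hq (measurableSet_singleton 0)
  have hmin : Integrable (fun x => min (a * q x) (b * p x)) μ :=
    (hqi.const_mul a).inf (hpi.const_mul b)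
  calc ∫ x, min a (b * (P.rnDeriv Q x).toReal) ∂Q
      = ∫ x, min a (b * (p x / q x)) ∂Q := by
        refine integral_congr_ae ?_
        filter_upwards [toReal_rnDeriv_ae_eq_div hp hq hp0 hq0 hP hQ] with x hx
        rw [hx]
    _ = ∫ x, q x * min a (b * (p x / q x)) ∂μ := by
        rw [hQ, integral_withDensity_ofReal hq hq0]
    _ = ∫ x, (min (a * q x) (b * p x) -
          {x | q x = 0}.indicator (fun x => min 0 b * p x) x) ∂μ := by
        simp only [mul_min_mul_div a b (hp0 _) (hq0 _), Set.indicator_apply, Set.mem_ofPred_eq]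
    _ = (∫ x, min (a * q x) (b * p x) ∂μ) - min 0 b * (P.singularPart Q).real Set.univ := by
        rw [integral_sub hmin ((hpi.const_mul _).indicator hZ), integral_indicator hZ,
          integral_const_mul, measureReal_univ_singularPart_eq_setIntegral hp hq hp0 hq0 hP hQ]

lemma integrable_min_mul_rnDeriv [IsFiniteMeasure P] [IsFiniteMeasure Q] (a b : ℝ) :
    Integrable (fun x => min a (b * (P.rnDeriv Q x).toReal)) Q :=
  (integrable_const a).inf (Measure.integrable_toReal_rnDeriv.const_mul b)

lemma Ifc_eq_mul_min_sub_integral [IsFiniteMeasure P] [IsFiniteMeasure Q] (c : ℝ) :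
    Ifc c P Q = Q.real Set.univ * min (1 - c) c -
      ∫ x, min (1 - c) (c * (P.rnDeriv Q x).toReal) ∂Q := by
  rw [Ifc, integral_sub (integrable_const _) (integrable_min_mul_rnDeriv _ _), integral_const,
    smul_eq_mul]

lemma integral_eq_one_of_eq_withDensity_ofReal [IsProbabilityMeasure P] (hp : Measurable p)
    (hp0 : ∀ x, 0 ≤ p x) (hP : P = μ.withDensity (fun x => ENNReal.ofReal (p x))) :
    ∫ x, p x ∂μ = 1 := by
  rw [← setIntegral_univ, ← measureReal_withDensity_ofReal hp hp0 .univ, ← hP, probReal_univ]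

/-- The last term is what `Ifc` leaves out: for `P` not absolutely continuous with respect to `Q`,
an `f`-divergence also charges the singular part of `P` at the rate `lim f_c(t) / t = -min 0 c`. -/
theorem primitive_fdiv_eq_tv_form_general [IsProbabilityMeasure P] [IsProbabilityMeasure Q]
    (hp : Measurable p) (hq : Measurable q) (hp0 : ∀ x, 0 ≤ p x) (hq0 : ∀ x, 0 ≤ q x)
    (hP : P = μ.withDensity (fun x => ENNReal.ofReal (p x)))
    (hQ : Q = μ.withDensity (fun x => ENNReal.ofReal (q x))) (c : ℝ) :
    Ifc c P Q = (1 / 2) * (∫ x, |c * p x - (1 - c) * q x| ∂μ) - (1 / 2) * |1 - 2 * c| +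
      min 0 c * (P.singularPart Q).real Set.univ := by
  have hpi := integrable_of_eq_withDensity_ofReal hp hp0 hP
  have hqi := integrable_of_eq_withDensity_ofReal hq hq0 hQ
  have hmin : min (1 - c) c = (1 - |1 - 2 * c|) / 2 := by
    rw [min_eq_half_add_sub_abs]
    ring_nf
  rw [Ifc_eq_mul_min_sub_integral, probReal_univ, one_mul,
    integral_min_mul_rnDeriv_eq_sub_singularPart hp hq hp0 hq0 hP hQ,
    integral_min_mul_mul hpi hqi, integral_eq_one_of_eq_withDensity_ofReal hp hp0 hP,
    integral_eq_one_of_eq_withDensity_ofReal hq hq0 hQ, hmin]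
  simp only [abs_sub_comm (c * p _)]
  ring

end RealDensities

/-- `I_{f_c}(P,Q) = (1/2)·∫ |c·p − (1−c)·q| dμ − (1/2)·|1 − 2c|`, where
`p, q` are densities of `P, Q` with respect to a common dominating measure `μ`, so that
`∫ |c·p − (1−c)·q| dμ` is the total variation distance between `cP` and `(1−c)Q`. -/
theorem primitive_fdiv_eq_tv_form
    {Ω : Type*} [MeasurableSpace Ω] (P Q μ : Measure Ω)
    [IsProbabilityMeasure P] [IsProbabilityMeasure Q] [SigmaFinite μ]
    (hPQ : P ≪ Q)
    (p q : Ω → ℝ) (hp : Measurable p) (hq : Measurable q)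
    (hp0 : ∀ x, 0 ≤ p x) (hq0 : ∀ x, 0 ≤ q x)
    (hP : P = μ.withDensity (fun x => ENNReal.ofReal (p x)))
    (hQ : Q = μ.withDensity (fun x => ENNReal.ofReal (q x)))
    (c : ℝ) (hc : c ∈ Set.Icc (0 : ℝ) 1) :
    Ifc c P Q = (1 / 2) * (∫ x, |c * p x - (1 - c) * q x| ∂μ) - (1 / 2) * |1 - 2 * c| := by
  simpa [Measure.singularPart_eq_zero_of_ac hPQ] using
    primitive_fdiv_eq_tv_form_general hp hq hp0 hq0 hP hQ c
end

section
/- For all probability measures P and Q on a measurable space with P ≪ Q and every c ∈ [0,1], the c-primitive f-divergence is bounded by the Hellinger distance as I_{f_c}(P,Q) ≤ min(c, 1−c) · He(P,Q) · sqrt(1 − He²(P,Q)/4), where He(P,Q) := sqrt(He²(P,Q)). -/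
open MeasureTheory

/-- The squared Hellinger distance `He²(P,Q) = ∫ (√(dP/dμ) − √(dQ/dμ))² dμ`, computed with
respect to the common dominating measure `μ = P + Q`. -/
noncomputable def hellingerSq {Ω : Type*} [MeasurableSpace Ω] (P Q : Measure Ω) : ℝ :=
  ∫ x, (Real.sqrt ((P.rnDeriv (P + Q) x).toReal)
        - Real.sqrt ((Q.rnDeriv (P + Q) x).toReal)) ^ 2 ∂(P + Q)

/-!
With `t = dP/dQ`, the primitive satisfies `f_c(t) ≤ min(c, 1-c) · (1 - t)⁺`. Let `p`, `q` be the
densities of `P`, `Q` with respect to `μ = P + Q`. Then `∫ (1 - t)⁺ dQ = ∫ (q - p)⁺ dμ`, because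
`(q - p)⁺` vanishes on the part of `P` singular to `Q`, and this is the total variation distance
`½ ∫ |p - q| dμ`. Factoring `p - q = (√p - √q)(√p + √q)`, the Cauchy–Schwarz inequality and the
parallelogram identity `∫ (√p + √q)² dμ = 4 - He²` bound it by `½ · He · √(4 - He²)`.
-/

/-- The total variation distance `½ ∫ |dP/dμ - dQ/dμ| dμ`, computed, like `hellingerSq`, with
respect to `μ = P + Q`. It is intermediate between `Ifc` and `hellingerSq`. -/
noncomputable def tvDist {Ω : Type*} [MeasurableSpace Ω] (P Q : Measure Ω) : ℝ :=
  (∫ x, |(P.rnDeriv (P + Q) x).toReal - (Q.rnDeriv (P + Q) x).toReal| ∂(P + Q)) / 2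

section SquareRoots

variable {Ω : Type*} [MeasurableSpace Ω] {μ : Measure Ω} {f g : Ω → ℝ}

theorem integral_abs_mul_le_sqrt_mul_sqrt (hf : MemLp f 2 μ) (hg : MemLp g 2 μ) :
    ∫ x, |f x * g x| ∂μ ≤ √(∫ x, f x ^ 2 ∂μ) * √(∫ x, g x ^ 2 ∂μ) := by
  have holder := integral_mul_norm_le_Lp_mul_Lq Real.HolderConjugate.two_two
    (by simpa using hf) (by simpa using hg)
  simpa [abs_mul, Real.sqrt_eq_rpow] using holder

theorem memLp_two_sqrt (hf : Integrable f μ) : MemLp (fun x => √(f x)) 2 μ := by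
  have hmeas : AEStronglyMeasurable (fun x => √(f x)) μ :=
    Real.continuous_sqrt.comp_aestronglyMeasurable hf.aestronglyMeasurable
  simpa only [memLp_two_iff_integrable_sq hmeas, Real.sq_sqrt'] using hf.pos_part

theorem integral_sq_sqrt_add_sqrt (hf : Integrable f μ) (hg : Integrable g μ)
    (hf_nonneg : ∀ x, 0 ≤ f x) (hg_nonneg : ∀ x, 0 ≤ g x) :
    ∫ x, (√(f x) + √(g x)) ^ 2 ∂μ =
      2 * (∫ x, f x ∂μ + ∫ x, g x ∂μ) - ∫ x, (√(f x) - √(g x)) ^ 2 ∂μ := by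
  have hsf := memLp_two_sqrt hf
  have hsg := memLp_two_sqrt hg
  have parallelogram (x : Ω) :
      (√(f x) + √(g x)) ^ 2 = 2 * (f x + g x) - (√(f x) - √(g x)) ^ 2 := by
    linear_combination 2 * Real.sq_sqrt (hf_nonneg x) + 2 * Real.sq_sqrt (hg_nonneg x)
  simp only [parallelogram]
  calc ∫ x, (2 * (f x + g x) - (√(f x) - √(g x)) ^ 2) ∂μ
      = ∫ x, 2 * (f x + g x) ∂μ - ∫ x, (√(f x) - √(g x)) ^ 2 ∂μ :=
        integral_sub ((hf.add hg).const_mul 2) (hsf.sub hsg).integrable_sq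
    _ = _ := by rw [integral_const_mul, integral_add hf hg]

theorem integral_abs_sub_le_sqrt_mul_sqrt (hf : Integrable f μ) (hg : Integrable g μ)
    (hf_nonneg : ∀ x, 0 ≤ f x) (hg_nonneg : ∀ x, 0 ≤ g x) :
    ∫ x, |f x - g x| ∂μ ≤
      √(∫ x, (√(f x) - √(g x)) ^ 2 ∂μ) * √(∫ x, (√(f x) + √(g x)) ^ 2 ∂μ) := by
  have hsf := memLp_two_sqrt hf
  have hsg := memLp_two_sqrt hg
  have factor (x : Ω) : f x - g x = (√(f x) - √(g x)) * (√(f x) + √(g x)) := by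
    linear_combination Real.sq_sqrt (hg_nonneg x) - Real.sq_sqrt (hf_nonneg x)
  calc ∫ x, |f x - g x| ∂μ = ∫ x, |(√(f x) - √(g x)) * (√(f x) + √(g x))| ∂μ := by
        simp only [← factor]
    _ ≤ _ := integral_abs_mul_le_sqrt_mul_sqrt (hsf.sub hsg) (hsf.add hsg)

end SquareRoots

theorem primitive_le_min_mul_posPart {c t : ℝ} (hc : c ∈ Set.Icc (0 : ℝ) 1) (ht : 0 ≤ t) :
    min (1 - c) c - min (1 - c) (c * t) ≤ min c (1 - c) * (1 - t)⁺ := by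
  have hm : 0 ≤ min c (1 - c) := le_min hc.1 (sub_nonneg.2 hc.2)
  have posPart_eq : (1 - t)⁺ = 1 - min 1 t := by
    rw [posPart_def, ← max_sub_sub_left, sub_self, max_comm]
  have le_one_sub : min c (1 - c) * min 1 t ≤ 1 - c :=
    (mul_le_of_le_one_right hm (min_le_left 1 t)).trans (min_le_right c (1 - c))
  have le_mul : min c (1 - c) * min 1 t ≤ c * t :=
    mul_le_mul (min_le_left c (1 - c)) (min_le_right 1 t) (le_min zero_le_one ht) hc.1
  rw [posPart_eq, min_comm (1 - c) c]
  linarith [le_min le_one_sub le_mul]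

section Divergences

variable {Ω : Type*} [MeasurableSpace Ω] {P Q : Measure Ω}

theorem integral_posPart_one_sub_rnDeriv {μ : Measure Ω} [SigmaFinite P] [SigmaFinite Q]
    [SigmaFinite μ] (hP : P ≪ μ) (hQ : Q ≪ μ) :
    ∫ x, (1 - (P.rnDeriv Q x).toReal)⁺ ∂Q =
      ∫ x, ((Q.rnDeriv μ x).toReal - (P.rnDeriv μ x).toReal)⁺ ∂μ := by
  rw [← integral_toReal_rnDeriv_mul hQ]
  refine integral_congr_ae ?_
  filter_upwards [Measure.ae_rnDeriv_ne_zero_imp_of_ae μ (Measure.rnDeriv_eq_div hP hQ),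
    Q.rnDeriv_ne_top μ] with x hdiv hfin
  rcases eq_or_ne (Q.rnDeriv μ x) 0 with hzero | hne
  · simp [hzero]
  · have hpos : 0 < (Q.rnDeriv μ x).toReal := ENNReal.toReal_pos hne hfin
    rw [hdiv hne, ENNReal.toReal_div, posPart_def, posPart_def, mul_max_of_nonneg _ _ hpos.le,
      mul_zero, mul_sub, mul_one, mul_div_cancel₀ _ hpos.ne']

variable [IsFiniteMeasure P] [IsFiniteMeasure Q]

theorem Ifc_le_min_mul_integral_posPart {c : ℝ} (hc : c ∈ Set.Icc (0 : ℝ) 1) :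
    Ifc c P Q ≤ min c (1 - c) * ∫ x, (1 - (P.rnDeriv Q x).toReal)⁺ ∂Q := by
  have ht : Integrable (fun x => (P.rnDeriv Q x).toReal) Q := Measure.integrable_toReal_rnDeriv
  rw [← integral_const_mul]
  refine integral_mono ?_ ?_ fun x => primitive_le_min_mul_posPart hc ENNReal.toReal_nonneg
  · exact (integrable_const _).sub ((integrable_const _).inf (ht.const_mul c))
  · exact ((integrable_const 1).sub ht).pos_part.const_mul _

theorem integral_posPart_one_sub_rnDeriv_eq_tvDist_add :
    ∫ x, (1 - (P.rnDeriv Q x).toReal)⁺ ∂Q =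
      tvDist P Q + (Q.real Set.univ - P.real Set.univ) / 2 := by
  have hP : P ≪ P + Q := Measure.AbsolutelyContinuous.rfl.add_right Q
  have hQ : Q ≪ P + Q := Measure.AbsolutelyContinuous.rfl.add_right' P
  have hp : Integrable (fun x => (P.rnDeriv (P + Q) x).toReal) (P + Q) :=
    Measure.integrable_toReal_rnDeriv
  have hq : Integrable (fun x => (Q.rnDeriv (P + Q) x).toReal) (P + Q) :=
    Measure.integrable_toReal_rnDeriv
  have abs_eq := integral_abs_eq_two_mul_integral_posPart_sub_integral (hq.sub hp)
  simp only [Pi.sub_apply] at abs_eq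
  rw [integral_sub hq hp, Measure.integral_toReal_rnDeriv hP,
    Measure.integral_toReal_rnDeriv hQ] at abs_eq
  simp only [tvDist, abs_sub_comm (P.rnDeriv _ _).toReal]
  rw [integral_posPart_one_sub_rnDeriv hP hQ, abs_eq]
  ring

theorem tvDist_le_sqrt_hellingerSq_mul_sqrt :
    tvDist P Q ≤ √(hellingerSq P Q) *
      √((P.real Set.univ + Q.real Set.univ) / 2 - hellingerSq P Q / 4) := by
  have hP : P ≪ P + Q := Measure.AbsolutelyContinuous.rfl.add_right Q
  have hQ : Q ≪ P + Q := Measure.AbsolutelyContinuous.rfl.add_right' P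
  have hp : Integrable (fun x => (P.rnDeriv (P + Q) x).toReal) (P + Q) :=
    Measure.integrable_toReal_rnDeriv
  have hq : Integrable (fun x => (Q.rnDeriv (P + Q) x).toReal) (P + Q) :=
    Measure.integrable_toReal_rnDeriv
  set H := hellingerSq P Q with hH
  set M := P.real Set.univ + Q.real Set.univ with hM
  have cauchy_schwarz := integral_abs_sub_le_sqrt_mul_sqrt hp hq
    (fun _ => ENNReal.toReal_nonneg) (fun _ => ENNReal.toReal_nonneg)
  rw [integral_sq_sqrt_add_sqrt hp hq (fun _ => ENNReal.toReal_nonneg)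
    (fun _ => ENNReal.toReal_nonneg), Measure.integral_toReal_rnDeriv hP,
    Measure.integral_toReal_rnDeriv hQ, ← hellingerSq, ← hH, ← hM] at cauchy_schwarz
  have sqrt_rescale : √(2 * M - H) = 2 * √(M / 2 - H / 4) := by
    rw [show 2 * M - H = 2 ^ 2 * (M / 2 - H / 4) by ring, Real.sqrt_mul (by norm_num),
      Real.sqrt_sq zero_le_two]
  rw [sqrt_rescale] at cauchy_schwarz
  rw [tvDist]
  linarith

end Divergences

theorem primitive_fdiv_le_hellinger_joint_range_general
    {Ω : Type*} [MeasurableSpace Ω] (P Q : Measure Ω)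
    [IsProbabilityMeasure P] [IsProbabilityMeasure Q]
    (c : ℝ) (hc : c ∈ Set.Icc (0 : ℝ) 1) :
    Ifc c P Q ≤ min c (1 - c) * Real.sqrt (hellingerSq P Q)
        * Real.sqrt (1 - hellingerSq P Q / 4) := by
  have hm : 0 ≤ min c (1 - c) := le_min hc.1 (sub_nonneg.2 hc.2)
  have tv_eq : ∫ x, (1 - (P.rnDeriv Q x).toReal)⁺ ∂Q = tvDist P Q := by
    simp [integral_posPart_one_sub_rnDeriv_eq_tvDist_add]
  have tv_le : tvDist P Q ≤ √(hellingerSq P Q) * √(1 - hellingerSq P Q / 4) := by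
    simpa using tvDist_le_sqrt_hellingerSq_mul_sqrt (P := P) (Q := Q)
  calc Ifc c P Q
      ≤ min c (1 - c) * ∫ x, (1 - (P.rnDeriv Q x).toReal)⁺ ∂Q :=
        Ifc_le_min_mul_integral_posPart hc
    _ ≤ min c (1 - c) * (√(hellingerSq P Q) * √(1 - hellingerSq P Q / 4)) :=
        mul_le_mul_of_nonneg_left (tv_eq.trans_le tv_le) hm
    _ = min c (1 - c) * √(hellingerSq P Q) * √(1 - hellingerSq P Q / 4) := (mul_assoc _ _ _).symm

/-- `I_{f_c}(P,Q) ≤ min(c, 1−c) · He(P,Q) · √(1 − He²(P,Q)/4)`,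
where `He(P,Q) = √(He²(P,Q))`. -/
theorem primitive_fdiv_le_hellinger_joint_range
    {Ω : Type*} [MeasurableSpace Ω] (P Q : Measure Ω)
    [IsProbabilityMeasure P] [IsProbabilityMeasure Q]
    (hPQ : P ≪ Q) (c : ℝ) (hc : c ∈ Set.Icc (0 : ℝ) 1) :
    Ifc c P Q ≤ min c (1 - c) * Real.sqrt (hellingerSq P Q)
        * Real.sqrt (1 - hellingerSq P Q / 4) :=
  primitive_fdiv_le_hellinger_joint_range_general P Q c hc
end

section
/- (Sub-additivity of squared Hellinger distance under products.) For any finite collections of probability measures P_1,…,P_k and Q_1,…,Q_k, with P_i and Q_i both on the measurable space O_i, the squared Hellinger distance between the product measures satisfies He²(⊗_{i=1}^k P_i, ⊗_{i=1}^k Q_i) ≤ Σ_{i=1}^k He²(P_i, Q_i). -/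
open MeasureTheory

/-!
Expanding the square gives `He²(P, Q) = 2 - 2 A(P, Q)`, where the affinity `A(P, Q) = ∫ √(dP dQ)`
lies in `[0, 1]`. The affinity does not depend on the dominating measure, so on a product space it
may be computed against a product measure, where densities multiply; by Fubini it is then
multiplicative. The claim becomes `1 - ∏ aᵢ ≤ ∑ (1 - aᵢ)` for `aᵢ ∈ [0, 1]`.
-/

theorem one_sub_prod_le_sum_one_sub {ι R : Type*} [CommRing R] [PartialOrder R] [IsOrderedRing R]
    {s : Finset ι} {a : ι → R} (h0 : ∀ i ∈ s, 0 ≤ a i) (h1 : ∀ i ∈ s, a i ≤ 1) :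
    1 - ∏ i ∈ s, a i ≤ ∑ i ∈ s, (1 - a i) := by
  induction s using Finset.cons_induction with
  | empty => simp
  | cons j s hj ih =>
    rw [Finset.forall_mem_cons] at h0 h1
    have prod_le : ∏ i ∈ s, a i ≤ 1 := Finset.prod_le_one h0.2 h1.2
    rw [Finset.prod_cons, Finset.sum_cons]
    calc 1 - a j * ∏ i ∈ s, a i = (1 - a j) + a j * (1 - ∏ i ∈ s, a i) := by ring
      _ ≤ (1 - a j) + (1 - ∏ i ∈ s, a i) := by
        gcongr
        exact mul_le_of_le_one_left (sub_nonneg.2 prod_le) h1.1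
      _ ≤ (1 - a j) + ∑ i ∈ s, (1 - a i) := by
        gcongr
        exact ih h0.2 h1.2

section Pi

open scoped ENNReal

theorem lintegral_fin_prod_eq_prod {n : ℕ} {Ω : Fin n → Type*} [∀ i, MeasurableSpace (Ω i)]
    (μ : ∀ i, Measure (Ω i)) [∀ i, SigmaFinite (μ i)] {f : ∀ i, Ω i → ℝ≥0∞}
    (hf : ∀ i, Measurable (f i)) :
    ∫⁻ x, ∏ i, f i (x i) ∂Measure.pi μ = ∏ i, ∫⁻ x, f i x ∂μ i := by
  induction n with
  | zero => simp
  | succ n ih =>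
    have tail_measurable : Measurable fun x : ∀ i : Fin n, Ω i.succ ↦ ∏ i, f i.succ (x i) := by
      fun_prop
    calc ∫⁻ x, ∏ i, f i (x i) ∂Measure.pi μ
        = ∫⁻ x : Ω 0 × (∀ i : Fin n, Ω i.succ), f 0 x.1 * ∏ i, f i.succ (x.2 i)
            ∂(μ 0).prod (Measure.pi fun i ↦ μ i.succ) := by
          simp_rw [Fin.prod_univ_succ]
          exact (measurePreserving_piFinSuccAbove μ 0).lintegral_comp
            (f := fun x : Ω 0 × (∀ i : Fin n, Ω i.succ) ↦ f 0 x.1 * ∏ i, f i.succ (x.2 i))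
            (by fun_prop)
      _ = (∫⁻ x, f 0 x ∂μ 0) * ∏ i : Fin n, ∫⁻ x, f i.succ x ∂μ i.succ := by
          rw [lintegral_prod_mul (hf 0).aemeasurable tail_measurable.aemeasurable,
            ih _ fun i ↦ hf i.succ]
      _ = ∏ i, ∫⁻ x, f i x ∂μ i := (Fin.prod_univ_succ fun i ↦ ∫⁻ x, f i x ∂μ i).symm

variable {ι : Type*} [Fintype ι] {Ω : ι → Type*} [∀ i, MeasurableSpace (Ω i)]

theorem lintegral_fintype_prod_eq_prod (μ : ∀ i, Measure (Ω i)) [∀ i, SigmaFinite (μ i)]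
    {f : ∀ i, Ω i → ℝ≥0∞} (hf : ∀ i, Measurable (f i)) :
    ∫⁻ x, ∏ i, f i (x i) ∂Measure.pi μ = ∏ i, ∫⁻ x, f i x ∂μ i := by
  let e := (Fintype.equivFin ι).symm
  rw [← (measurePreserving_piCongrLeft μ e).lintegral_comp (by fun_prop)]
  simp_rw [← e.prod_comp, MeasurableEquiv.coe_piCongrLeft, Equiv.piCongrLeft_apply_apply]
  exact lintegral_fin_prod_eq_prod (fun i ↦ μ (e i)) fun i ↦ hf (e i)

theorem pi_withDensity (μ : ∀ i, Measure (Ω i)) [∀ i, SigmaFinite (μ i)] {f : ∀ i, Ω i → ℝ≥0∞}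
    [∀ i, SigmaFinite ((μ i).withDensity (f i))] (hf : ∀ i, Measurable (f i)) :
    Measure.pi (fun i ↦ (μ i).withDensity (f i)) =
      (Measure.pi μ).withDensity fun x ↦ ∏ i, f i (x i) := by
  refine Measure.pi_eq fun s hs ↦ ?_
  rw [withDensity_apply _ (MeasurableSet.univ_pi hs), Measure.restrict_pi_pi,
    lintegral_fintype_prod_eq_prod _ hf]
  exact Finset.prod_congr rfl fun i _ ↦ (withDensity_apply _ (hs i)).symm

variable (P μ : ∀ i, Measure (Ω i)) [∀ i, SigmaFinite (P i)] [∀ i, SigmaFinite (μ i)]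

theorem pi_eq_withDensity_prod_rnDeriv (h : ∀ i, P i ≪ μ i) :
    Measure.pi P = (Measure.pi μ).withDensity fun x ↦ ∏ i, (P i).rnDeriv (μ i) (x i) := by
  rw [← pi_withDensity μ fun i ↦ Measure.measurable_rnDeriv (P i) (μ i)]
  simp_rw [Measure.withDensity_rnDeriv_eq _ _ (h _)]

theorem pi_absolutelyContinuous_pi (h : ∀ i, P i ≪ μ i) : Measure.pi P ≪ Measure.pi μ := by
  rw [pi_eq_withDensity_prod_rnDeriv P μ h]
  exact withDensity_absolutelyContinuous _ _

theorem rnDeriv_pi_ae_eq_prod (h : ∀ i, P i ≪ μ i) :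
    (Measure.pi P).rnDeriv (Measure.pi μ) =ᵐ[Measure.pi μ]
      fun x ↦ ∏ i, (P i).rnDeriv (μ i) (x i) := by
  rw [pi_eq_withDensity_prod_rnDeriv P μ h]
  exact Measure.rnDeriv_withDensity _ (by fun_prop)

end Pi

/-- The Hellinger affinity (Bhattacharyya coefficient) `∫ √(dP/dμ) √(dQ/dμ) dμ`, with
`μ = P + Q` as in `hellingerSq`. It is the part of the squared distance that is multiplicative
under products. -/
noncomputable def hellingerAffinity {Ω : Type*} [MeasurableSpace Ω] (P Q : Measure Ω) : ℝ :=
  ∫ x, √(P.rnDeriv (P + Q) x).toReal * √(Q.rnDeriv (P + Q) x).toReal ∂(P + Q)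

section Affinity

variable {Ω : Type*} [MeasurableSpace Ω] (P Q : Measure Ω)

theorem hellingerSq_nonneg : 0 ≤ hellingerSq P Q :=
  integral_nonneg fun _ ↦ sq_nonneg _

theorem hellingerAffinity_nonneg : 0 ≤ hellingerAffinity P Q :=
  integral_nonneg fun _ ↦ by positivity

theorem memLp_two_sqrt_rnDeriv (μ : Measure Ω) [IsFiniteMeasure P] :
    MemLp (fun x ↦ √(P.rnDeriv μ x).toReal) 2 μ := by
  refine (memLp_two_iff_integrable_sq (Measurable.aestronglyMeasurable (by fun_prop))).2 ?_
  simp_rw [Real.sq_sqrt ENNReal.toReal_nonneg]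
  exact Measure.integrable_toReal_rnDeriv

theorem hellingerSq_eq_real_univ_sub_two_mul_affinity [IsFiniteMeasure P] [IsFiniteMeasure Q] :
    hellingerSq P Q = P.real .univ + Q.real .univ - 2 * hellingerAffinity P Q := by
  let μ := P + Q
  have hP : P ≪ μ := Measure.AbsolutelyContinuous.rfl.add_right Q
  have hQ : Q ≪ μ := Measure.AbsolutelyContinuous.rfl.add_right' P
  have integrable_P : Integrable (fun x ↦ (P.rnDeriv μ x).toReal) μ :=
    Measure.integrable_toReal_rnDeriv
  have integrable_Q : Integrable (fun x ↦ (Q.rnDeriv μ x).toReal) μ :=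
    Measure.integrable_toReal_rnDeriv
  have integrable_sqrt_mul :
      Integrable (fun x ↦ √(P.rnDeriv μ x).toReal * √(Q.rnDeriv μ x).toReal) μ :=
    (memLp_two_sqrt_rnDeriv P μ).integrable_mul (memLp_two_sqrt_rnDeriv Q μ)
  calc hellingerSq P Q
      = ∫ x, ((P.rnDeriv μ x).toReal + (Q.rnDeriv μ x).toReal
          - 2 * (√(P.rnDeriv μ x).toReal * √(Q.rnDeriv μ x).toReal)) ∂μ := by
        refine integral_congr_ae (.of_forall fun x ↦ ?_)
        simp only [sub_sq, Real.sq_sqrt ENNReal.toReal_nonneg]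
        ring
    _ = P.real .univ + Q.real .univ - 2 * hellingerAffinity P Q := by
        rw [integral_sub (integrable_P.fun_add integrable_Q) (integrable_sqrt_mul.const_mul 2),
          integral_add integrable_P integrable_Q, integral_const_mul,
          Measure.integral_toReal_rnDeriv hP, Measure.integral_toReal_rnDeriv hQ,
          hellingerAffinity]

variable {P Q} in
theorem hellingerAffinity_eq_integral [SigmaFinite P] [SigmaFinite Q] {ν : Measure Ω}
    [SigmaFinite ν] (hP : P ≪ ν) (hQ : Q ≪ ν) :
    hellingerAffinity P Q = ∫ x, √(P.rnDeriv ν x).toReal * √(Q.rnDeriv ν x).toReal ∂ν := by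
  have chain_P : P.rnDeriv (P + Q) * (P + Q).rnDeriv ν =ᵐ[ν] P.rnDeriv ν :=
    Measure.rnDeriv_mul_rnDeriv (Measure.AbsolutelyContinuous.rfl.add_right Q)
  have chain_Q : Q.rnDeriv (P + Q) * (P + Q).rnDeriv ν =ᵐ[ν] Q.rnDeriv ν :=
    Measure.rnDeriv_mul_rnDeriv (Measure.AbsolutelyContinuous.rfl.add_right' P)
  rw [hellingerAffinity, ← integral_toReal_rnDeriv_mul (hP.add_left hQ)]
  refine integral_congr_ae ?_
  filter_upwards [chain_P, chain_Q] with x hx_P hx_Q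
  rw [← hx_P, ← hx_Q]
  simp only [Pi.mul_apply, ENNReal.toReal_mul, Real.sqrt_mul ENNReal.toReal_nonneg]
  rw [mul_mul_mul_comm, Real.mul_self_sqrt ENNReal.toReal_nonneg, mul_comm]

theorem hellingerSq_eq_two_mul_one_sub_affinity [IsProbabilityMeasure P]
    [IsProbabilityMeasure Q] : hellingerSq P Q = 2 * (1 - hellingerAffinity P Q) := by
  rw [hellingerSq_eq_real_univ_sub_two_mul_affinity, probReal_univ, probReal_univ]
  ring

theorem hellingerAffinity_le_one [IsProbabilityMeasure P] [IsProbabilityMeasure Q] :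
    hellingerAffinity P Q ≤ 1 := by
  linarith [hellingerSq_nonneg P Q, hellingerSq_eq_two_mul_one_sub_affinity P Q]

end Affinity

theorem hellingerAffinity_pi {ι : Type*} [Fintype ι] {Ω : ι → Type*}
    [∀ i, MeasurableSpace (Ω i)] (P Q : ∀ i, Measure (Ω i))
    [∀ i, SigmaFinite (P i)] [∀ i, SigmaFinite (Q i)] :
    hellingerAffinity (Measure.pi P) (Measure.pi Q) = ∏ i, hellingerAffinity (P i) (Q i) := by
  let μ i := P i + Q i
  have hP i : P i ≪ μ i := Measure.AbsolutelyContinuous.rfl.add_right (Q i)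
  have hQ i : Q i ≪ μ i := Measure.AbsolutelyContinuous.rfl.add_right' (P i)
  calc hellingerAffinity (Measure.pi P) (Measure.pi Q)
      = ∫ x, √((Measure.pi P).rnDeriv (Measure.pi μ) x).toReal
          * √((Measure.pi Q).rnDeriv (Measure.pi μ) x).toReal ∂Measure.pi μ :=
        hellingerAffinity_eq_integral (pi_absolutelyContinuous_pi P μ hP)
          (pi_absolutelyContinuous_pi Q μ hQ)
    _ = ∫ x, ∏ i, (√((P i).rnDeriv (μ i) (x i)).toReal * √((Q i).rnDeriv (μ i) (x i)).toReal)
          ∂Measure.pi μ := by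
        refine integral_congr_ae ?_
        filter_upwards [rnDeriv_pi_ae_eq_prod P μ hP, rnDeriv_pi_ae_eq_prod Q μ hQ]
          with x hx_P hx_Q
        simp only [hx_P, hx_Q, ENNReal.toReal_prod, Finset.prod_mul_distrib,
          Real.sqrt_prod _ fun _ _ ↦ ENNReal.toReal_nonneg]
    _ = ∏ i, hellingerAffinity (P i) (Q i) :=
        integral_fintype_prod_eq_prod fun i x ↦
          √((P i).rnDeriv (μ i) x).toReal * √((Q i).rnDeriv (μ i) x).toReal

/-- sub-additivity of the squared Hellinger distance under products:
`He²(⊗ᵢ Pᵢ, ⊗ᵢ Qᵢ) ≤ Σᵢ He²(Pᵢ, Qᵢ)`. -/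
theorem hellingerSq_pi_le_sum
    {ι : Type*} [Fintype ι] {Ω : ι → Type*} [∀ i, MeasurableSpace (Ω i)]
    (P Q : ∀ i, Measure (Ω i))
    [∀ i, IsProbabilityMeasure (P i)] [∀ i, IsProbabilityMeasure (Q i)] :
    hellingerSq (Measure.pi P) (Measure.pi Q) ≤ ∑ i, hellingerSq (P i) (Q i) := by
  simp_rw [hellingerSq_eq_two_mul_one_sub_affinity, hellingerAffinity_pi, ← Finset.mul_sum]
  gcongr
  exact one_sub_prod_le_sum_one_sub (fun i _ ↦ hellingerAffinity_nonneg (P i) (Q i))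
    fun i _ ↦ hellingerAffinity_le_one (P i) (Q i)
end

section
/- (Hellinger distance between the hard instances.) Fix c ∈ (0,1), h ∈ [0, min(c,1−c)], V ≥ 2, p ∈ [0, 1/(V−1)], and distinct points x_1, …, x_V in X. For b ∈ {−1,1}^{V−1} let P_b be the distribution on X × {−1,1} with marginal P_b[X = x_i] = p for i ≤ V−1, P_b[X = x_V] = 1 − (V−1)p, and posterior η_b(x_i) = c − h if b_i = −1, η_b(x_i) = c + h if b_i = 1 (for i ≤ V−1), and η_b(x_V) = 0. Then for any b, b′ ∈ {−1,1}^{V−1}, He²(P_b, P_{b′}) = 2p·(1 − sqrt(c² − h²) − sqrt((1−c)² − h²))·ρ_Ha(b, b′). -/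
open MeasureTheory

/-- The hard instance `P_b` on `X × {−1,1}` (labels encoded by `Bool`, `true ↔ 1`): with
`V = m + 1` points `x 0, …, x m`, the `X`-marginal puts mass `p` on each `x i`, `i < m`,
and mass `1 − m·p` on `x m`; the posterior is `η_b(x i) = c + h·b i` (i.e. `c + h` when
`b i = 1`, `c − h` when `b i = −1`) for `i < m`, and `η_b(x m) = 0`. -/
noncomputable def hardP {X : Type*} [MeasurableSpace X] (m : ℕ) (x : Fin (m + 1) → X)
    (p c h : ℝ) (b : Fin m → Bool) : Measure (X × Bool) :=
  (∑ i : Fin m,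
      (ENNReal.ofReal (p * (c + h * (if b i then 1 else -1)))
          • Measure.dirac (x i.castSucc, true)
        + ENNReal.ofReal (p * (1 - (c + h * (if b i then 1 else -1))))
          • Measure.dirac (x i.castSucc, false)))
    + ENNReal.ofReal (1 - m * p) • Measure.dirac (x (Fin.last m), false)

/-!
`P_b` and `P_{b'}` share their `X`-marginal, so the squared Hellinger distance is the
marginal-weighted average of the distances between the Bernoulli laws of the labels. The term at
`x i` vanishes if `b i = b' i`, and otherwise it compares the parameters `c + h` and `c - h`, with
affinity `√((c + h)(c - h)) + √((1 - c - h)(1 - c + h))`.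

To evaluate the integral of Radon-Nikodym derivatives over `X × Bool`, which need not be discrete,
the measures are pulled back to the finite set of atoms, where the counting measure replaces
`P + Q` as dominating measure.
-/

open scoped NNReal ENNReal

section Hellinger

variable {Ω : Type*} [MeasurableSpace Ω]

theorem hellingerSq_eq_integral_rnDeriv {P Q μ : Measure Ω} [SigmaFinite P] [SigmaFinite Q]
    [SigmaFinite μ] (hP : P ≪ μ) (hQ : Q ≪ μ) :
    hellingerSq P Q = ∫ ω, (√(P.rnDeriv μ ω).toReal - √(Q.rnDeriv μ ω).toReal) ^ 2 ∂μ := by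
  have hPQ : P + Q ≪ μ := hP.add_left hQ
  have chainP := Measure.rnDeriv_mul_rnDeriv (κ := μ) (Measure.le_add_right le_rfl :
    P ≤ P + Q).absolutelyContinuous
  have chainQ := Measure.rnDeriv_mul_rnDeriv (κ := μ) (Measure.le_add_left le_rfl :
    Q ≤ P + Q).absolutelyContinuous
  rw [hellingerSq, ← integral_toReal_rnDeriv_mul hPQ]
  refine integral_congr_ae ?_
  filter_upwards [chainP, chainQ] with ω hPω hQω
  rw [← hPω, ← hQω, Pi.mul_apply, Pi.mul_apply, ENNReal.toReal_mul, ENNReal.toReal_mul,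
    Real.sqrt_mul ENNReal.toReal_nonneg, Real.sqrt_mul ENNReal.toReal_nonneg, ← sub_mul, mul_pow,
    Real.sq_sqrt ENNReal.toReal_nonneg, mul_comm]

theorem hellingerSq_withDensity {μ : Measure Ω} [SigmaFinite μ] {f g : Ω → ℝ≥0}
    (hf : AEMeasurable f μ) (hg : AEMeasurable g μ) :
    hellingerSq (μ.withDensity fun ω ↦ f ω) (μ.withDensity fun ω ↦ g ω)
      = ∫ ω, (√(f ω : ℝ) - √(g ω : ℝ)) ^ 2 ∂μ := by
  rw [hellingerSq_eq_integral_rnDeriv (withDensity_absolutelyContinuous μ _)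
    (withDensity_absolutelyContinuous μ _)]
  refine integral_congr_ae ?_
  filter_upwards [Measure.rnDeriv_withDensity₀ μ hf.coe_nnreal_ennreal,
    Measure.rnDeriv_withDensity₀ μ hg.coe_nnreal_ennreal] with ω hfω hgω
  rw [hfω, hgω, ENNReal.coe_toReal, ENNReal.coe_toReal]

theorem hellingerSq_map {Ω' : Type*} [MeasurableSpace Ω'] {e : Ω → Ω'} (he : MeasurableEmbedding e)
    (P Q : Measure Ω) [SigmaFinite P] [SigmaFinite Q] :
    hellingerSq (P.map e) (Q.map e) = hellingerSq P Q := by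
  rw [hellingerSq, ← Measure.map_add _ _ he.measurable, he.integral_map]
  refine integral_congr_ae ?_
  filter_upwards [he.rnDeriv_map P (P + Q), he.rnDeriv_map Q (P + Q)] with ω hPω hQω
  rw [hPω, hQω]

theorem sum_smul_dirac_eq_map_withDensity_count {ι : Type*} [Fintype ι] [MeasurableSpace ι]
    [MeasurableSingletonClass ι] (y : ι → Ω) (f : ι → ℝ≥0∞) :
    ∑ i, f i • Measure.dirac (y i) = (Measure.count.withDensity f).map y := by
  have hy : Measurable y := measurable_of_finite y
  rw [← Measure.sum_smul_dirac (Measure.count.withDensity f), Measure.sum_fintype,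
    Measure.map_finset_sum hy.aemeasurable]
  simp [Measure.map_dirac' hy]

theorem measurableEmbedding_of_countable [MeasurableSingletonClass Ω] {ι : Type*} [Countable ι]
    [MeasurableSpace ι] [MeasurableSingletonClass ι] {y : ι → Ω} (hy : Function.Injective y) :
    MeasurableEmbedding y where
  injective := hy
  measurable := measurable_of_countable y
  measurableSet_image' s _ := (s.to_countable.image y).measurableSet

theorem hellingerSq_sum_dirac [MeasurableSingletonClass Ω] {ι : Type*} [Fintype ι] {y : ι → Ω}
    (hy : Function.Injective y) (f g : ι → ℝ≥0) :
    hellingerSq (∑ i, (f i : ℝ≥0∞) • Measure.dirac (y i)) (∑ i, (g i : ℝ≥0∞) • Measure.dirac (y i))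
      = ∑ i, (√(f i : ℝ) - √(g i : ℝ)) ^ 2 := by
  let _ : MeasurableSpace ι := ⊤
  rw [sum_smul_dirac_eq_map_withDensity_count, sum_smul_dirac_eq_map_withDensity_count,
    hellingerSq_map (measurableEmbedding_of_countable hy),
    hellingerSq_withDensity (measurable_of_finite f).aemeasurable
      (measurable_of_finite g).aemeasurable,
    integral_count]

end Hellinger

/-- The squared Hellinger distance between the Bernoulli laws with parameters `a` and `b`, as an
explicit function of the parameters (meaningful for `a` and `b` in `[0, 1]`). -/
noncomputable def bernoulliHellingerSq (a b : ℝ) : ℝ :=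
  (√a - √b) ^ 2 + (√(1 - a) - √(1 - b)) ^ 2

theorem bernoulliHellingerSq_self (a : ℝ) : bernoulliHellingerSq a a = 0 := by
  simp [bernoulliHellingerSq]

theorem bernoulliHellingerSq_comm (a b : ℝ) :
    bernoulliHellingerSq a b = bernoulliHellingerSq b a := by
  rw [bernoulliHellingerSq, bernoulliHellingerSq, sub_sq_comm √a, sub_sq_comm √(1 - a)]

theorem sq_sqrt_sub_sqrt {u v : ℝ} (hu : 0 ≤ u) (hv : 0 ≤ v) :
    (√u - √v) ^ 2 = u + v - 2 * √(u * v) := by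
  rw [sub_sq, Real.sq_sqrt hu, Real.sq_sqrt hv, Real.sqrt_mul hu]
  ring

theorem bernoulliHellingerSq_eq_of_mem_Icc {a b : ℝ} (ha : a ∈ Set.Icc 0 1)
    (hb : b ∈ Set.Icc 0 1) :
    bernoulliHellingerSq a b = 2 * (1 - √(a * b) - √((1 - a) * (1 - b))) := by
  rw [bernoulliHellingerSq, sq_sqrt_sub_sqrt ha.1 hb.1,
    sq_sqrt_sub_sqrt (sub_nonneg.2 ha.2) (sub_nonneg.2 hb.2)]
  ring

theorem sqrt_coe_toNNReal (r : ℝ) : √(r.toNNReal : ℝ) = √r := by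
  rw [Real.sqrt, Real.toNNReal_coe, Real.sqrt]

theorem sq_sqrt_mul_sub_sqrt_mul {q : ℝ} (hq : 0 ≤ q) (u v : ℝ) :
    (√(q * u) - √(q * v)) ^ 2 = q * (√u - √v) ^ 2 := by
  rw [Real.sqrt_mul hq, Real.sqrt_mul hq, ← mul_sub, mul_pow, Real.sq_sqrt hq]

section BinaryLabelMeasure

variable {X ι : Type*} [MeasurableSpace X] [Fintype ι]

/-- The law of a point with a binary label: the point is `x i` with mass `q i`, and its label is
then `true` with posterior probability `η i`. -/
noncomputable def binaryLabelMeasure (x : ι → X) (q η : ι → ℝ) : Measure (X × Bool) :=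
  ∑ i, (ENNReal.ofReal (q i * η i) • Measure.dirac (x i, true)
    + ENNReal.ofReal (q i * (1 - η i)) • Measure.dirac (x i, false))

theorem binaryLabelMeasure_eq_sum_prod (x : ι → X) (q η : ι → ℝ) :
    binaryLabelMeasure x q η
      = ∑ z : ι × Bool, ((q z.1 * if z.2 then η z.1 else 1 - η z.1).toNNReal : ℝ≥0∞)
          • Measure.dirac (Prod.map x id z) := by
  simp [binaryLabelMeasure, Fintype.sum_prod_type, ENNReal.ofReal]

theorem hellingerSq_binaryLabelMeasure [MeasurableSingletonClass X] {x : ι → X}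
    (hx : Function.Injective x) {q : ι → ℝ} (hq : ∀ i, 0 ≤ q i) (η η' : ι → ℝ) :
    hellingerSq (binaryLabelMeasure x q η) (binaryLabelMeasure x q η')
      = ∑ i, q i * bernoulliHellingerSq (η i) (η' i) := by
  rw [binaryLabelMeasure_eq_sum_prod, binaryLabelMeasure_eq_sum_prod,
    hellingerSq_sum_dirac (hx.prodMap Function.injective_id), Fintype.sum_prod_type]
  refine Finset.sum_congr rfl fun i _ ↦ ?_
  simp only [sqrt_coe_toNNReal, sq_sqrt_mul_sub_sqrt_mul (hq i), ← Finset.mul_sum,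
    Fintype.sum_bool, if_true, Bool.false_eq_true, if_false, bernoulliHellingerSq]

end BinaryLabelMeasure

theorem sum_ite_ne_eq_mul_hammingDist {R ι : Type*} [NonAssocSemiring R] [Fintype ι]
    {β : ι → Type*} [∀ i, DecidableEq (β i)] (b b' : ∀ i, β i) (r : R) :
    ∑ i, (if b i ≠ b' i then r else 0) = r * hammingDist b b' := by
  rw [← Finset.sum_filter, Finset.sum_const, nsmul_eq_mul', hammingDist]

/-- The posterior `c ± h` of the hard instance at a point whose bit is `s`. -/
noncomputable def hardPosterior (c h : ℝ) (s : Bool) : ℝ :=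
  c + h * (if s then 1 else -1)

theorem hardP_eq_binaryLabelMeasure {X : Type*} [MeasurableSpace X] (m : ℕ) (x : Fin (m + 1) → X)
    (p c h : ℝ) (b : Fin m → Bool) :
    hardP m x p c h b
      = binaryLabelMeasure x (Fin.snoc (fun _ ↦ p) (1 - m * p))
          (Fin.snoc (fun i ↦ hardPosterior c h (b i)) 0) := by
  simp [hardP, binaryLabelMeasure, hardPosterior, Fin.sum_univ_castSucc]

theorem hardPosterior_true (c h : ℝ) : hardPosterior c h true = c + h := by
  simp [hardPosterior]

theorem hardPosterior_false (c h : ℝ) : hardPosterior c h false = c - h := by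
  simp [hardPosterior, sub_eq_add_neg]

theorem bernoulliHellingerSq_add_sub {c h : ℝ} (hh : |h| ≤ min c (1 - c)) :
    bernoulliHellingerSq (c + h) (c - h)
      = 2 * (1 - √(c ^ 2 - h ^ 2) - √((1 - c) ^ 2 - h ^ 2)) := by
  obtain ⟨⟨_, _⟩, _, _⟩ := (le_min_iff.1 hh).imp abs_le.1 abs_le.1
  have hadd : c + h ∈ Set.Icc 0 1 := ⟨by linarith, by linarith⟩
  have hsub : c - h ∈ Set.Icc 0 1 := ⟨by linarith, by linarith⟩
  rw [bernoulliHellingerSq_eq_of_mem_Icc hadd hsub, sq_sub_sq c h, sq_sub_sq (1 - c) h,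
    sub_add_eq_sub_sub, ← sub_add, mul_comm (1 - c - h)]

theorem bernoulliHellingerSq_hardPosterior {c h : ℝ} (hh : |h| ≤ min c (1 - c)) (s t : Bool) :
    bernoulliHellingerSq (hardPosterior c h s) (hardPosterior c h t)
      = if s ≠ t then 2 * (1 - √(c ^ 2 - h ^ 2) - √((1 - c) ^ 2 - h ^ 2)) else 0 := by
  split_ifs with hst
  · rw [← bernoulliHellingerSq_add_sub hh]
    cases s <;> cases t
    · contradiction
    · rw [hardPosterior_true, hardPosterior_false, bernoulliHellingerSq_comm]
    · rw [hardPosterior_true, hardPosterior_false]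
    · contradiction
  · rw [not_ne_iff.1 hst, bernoulliHellingerSq_self]

/-- Hellinger distance between the hard instances:
`He²(P_b, P_{b'}) = 2p·(1 − √(c² − h²) − √((1−c)² − h²))·ρ_Ha(b, b')`. -/
theorem hellingerSq_hardP
    {X : Type*} [MeasurableSpace X] [MeasurableSingletonClass X]
    (m : ℕ) (hm : 1 ≤ m) (x : Fin (m + 1) → X) (hx : Function.Injective x)
    (c h p : ℝ) (hc : c ∈ Set.Ioo (0 : ℝ) 1)
    (hh0 : 0 ≤ h) (hh1 : h ≤ min c (1 - c))
    (hp0 : 0 ≤ p) (hp1 : p ≤ 1 / m)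
    (b b' : Fin m → Bool) :
    hellingerSq (hardP m x p c h b) (hardP m x p c h b')
      = 2 * p * (1 - Real.sqrt (c ^ 2 - h ^ 2) - Real.sqrt ((1 - c) ^ 2 - h ^ 2))
          * (hammingDist b b' : ℝ) := by
  have hh : |h| ≤ min c (1 - c) := by rwa [abs_of_nonneg hh0]
  have hmp : 0 ≤ 1 - m * p := by
    rw [le_div_iff₀' (by exact_mod_cast hm)] at hp1
    exact sub_nonneg.2 hp1
  have marginal_nonneg : ∀ i, 0 ≤ Fin.snoc (α := fun _ ↦ ℝ) (fun _ : Fin m ↦ p) (1 - m * p) i :=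
    Fin.lastCases (by simpa using hmp) (fun _ ↦ by simpa using hp0)
  rw [hardP_eq_binaryLabelMeasure, hardP_eq_binaryLabelMeasure,
    hellingerSq_binaryLabelMeasure hx marginal_nonneg, Fin.sum_univ_castSucc]
  simp only [Fin.snoc_castSucc, Fin.snoc_last, bernoulliHellingerSq_self, mul_zero, add_zero,
    bernoulliHellingerSq_hardPosterior hh, ← Finset.mul_sum, sum_ite_ne_eq_mul_hammingDist]
  ring
end

section
/- For every c ∈ (0,1) and every h with 0 ≤ h ≤ min(c, 1−c), one has 1 − sqrt(c² − h²) − sqrt((1−c)² − h²) ≤ 2·h² / min(c, 1−c). -/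
theorem sub_div_le_sqrt_sq_sub {x y : ℝ} (hx : 0 < x) (hy : 0 ≤ y) (hyx : y ≤ x ^ 2) :
    x - y / x ≤ √(x ^ 2 - y) := by
  have sqrt_le : √(x ^ 2 - y) ≤ x := Real.sqrt_le_iff.2 ⟨hx.le, sub_le_self _ hy⟩
  calc
    x - y / x = (x ^ 2 - y) / x := by field_simp
    _ = √(x ^ 2 - y) * √(x ^ 2 - y) / x := by rw [Real.mul_self_sqrt (sub_nonneg.2 hyx)]
    _ ≤ √(x ^ 2 - y) * x / x := by gcongr
    _ = √(x ^ 2 - y) := mul_div_cancel_right₀ _ hx.ne'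

theorem one_sub_sqrt_sub_sqrt_le_general {a b h : ℝ} (ha : 0 < a) (hb : 0 < b)
    (hh : |h| ≤ min a b) :
    a + b - √(a ^ 2 - h ^ 2) - √(b ^ 2 - h ^ 2) ≤ 2 * h ^ 2 / min a b := by
  obtain ⟨hha, hhb⟩ := le_min_iff.1 hh
  have bound_a := sub_div_le_sqrt_sq_sub ha (sq_nonneg h) (sq_le_sq.2 (hha.trans (le_abs_self a)))
  have bound_b := sub_div_le_sqrt_sq_sub hb (sq_nonneg h) (sq_le_sq.2 (hhb.trans (le_abs_self b)))
  calc
    a + b - √(a ^ 2 - h ^ 2) - √(b ^ 2 - h ^ 2) ≤ h ^ 2 / a + h ^ 2 / b := by linarith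
    _ ≤ h ^ 2 / min a b + h ^ 2 / min a b := by
      gcongr
      · exact min_le_left a b
      · exact min_le_right a b
    _ = 2 * h ^ 2 / min a b := by ring

/-- for `c ∈ (0,1)` and `0 ≤ h ≤ min(c, 1−c)`,
`1 − √(c² − h²) − √((1−c)² − h²) ≤ 2h²/min(c, 1−c)`. -/
theorem one_sub_sqrt_sub_sqrt_le
    (c h : ℝ) (hc : c ∈ Set.Ioo (0 : ℝ) 1) (hh0 : 0 ≤ h) (hh1 : h ≤ min c (1 - c)) :
    1 - Real.sqrt (c ^ 2 - h ^ 2) - Real.sqrt ((1 - c) ^ 2 - h ^ 2)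
      ≤ 2 * h ^ 2 / min c (1 - c) := by
  simpa only [add_sub_cancel] using
    one_sub_sqrt_sub_sqrt_le_general hc.1 (sub_pos.2 hc.2) ((abs_of_nonneg hh0).trans_le hh1)
end

section
/- (Minimax lower bound for cost-sensitive classification.) Fix c ∈ (0,1) and write c̄ := 1−c. Let F be a class of measurable functions X → {−1,1} with VC dimension V ≥ 2, let h ∈ [0, min(c, c̄)], and let Θ_{h,F} be the set of joint distributions P_θ of (X,Y) on X × {−1,1} whose cost-sensitive Bayes classifier f*_θ (given by f*_θ(x) = 1 if η_θ(x) ≥ c, else −1) agrees with some member of F, and whose posterior satisfies |η_θ(X) − c| ≥ h almost surely. Then there exists an absolute constant K > 0 such that for any n ≥ V, the minimax regret risk R* := inf over learning rules f̂ (Markov kernels from (X × {−1,1})ⁿ to F) of sup over θ ∈ Θ_{h,F} of E_{S ∼ P_θⁿ} E_{f ∼ f̂(S)}[ er_{d_c}(f, P_θ) − er_{d_c}(f*_θ, P_θ) ] satisfies R* ≥ K · min(c, c̄) · min( sqrt(min(c, c̄)·V / n), min(c, c̄)·V / (n·h) ). -/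
open MeasureTheory ProbabilityTheory

/-- The joint distribution of `(X, Y)` on `X × {−1,1}` (labels encoded by `Bool`, with
`true ↔ 1` and `false ↔ −1`) with `X`-marginal `M` and posterior `η(x) = P[Y = 1 ∣ X = x]`. -/
noncomputable def joint {X : Type*} [MeasurableSpace X] (M : Measure X) (η : X → ℝ) :
    Measure (X × Bool) :=
  (M.withDensity fun x => ENNReal.ofReal (η x)).map (fun x => (x, true))
    + (M.withDensity fun x => ENNReal.ofReal (1 - η x)).map (fun x => (x, false))

/-- The cost-sensitive error function `d_c(y, ŷ) = 1[ŷ ≠ y]·((1−c)·1[y = 1] + c·1[y = −1])`. -/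
noncomputable def dcost (c y yhat : ℝ) : ℝ :=
  (if yhat = y then 0 else 1) * ((1 - c) * (if y = 1 then 1 else 0) + c * (if y = -1 then 1 else 0))

/-- The cost-sensitive generalization error `er_{d_c}(f, D) = E_{(X,Y)∼D}[d_c(Y, f(X))]`. -/
noncomputable def er {X : Type*} [MeasurableSpace X] (c : ℝ) (f : X → ℝ)
    (D : Measure (X × Bool)) : ℝ :=
  ∫ z, dcost c (if z.2 then 1 else -1) (f z.1) ∂D

/-- `F` shatters the finite set `s`: every `{−1,1}`-sign pattern on `s` is realized by
some member of `F`. -/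
def Shatters {X : Type*} (F : Set (X → ℝ)) (s : Finset X) : Prop :=
  ∀ σ : X → Bool, ∃ f ∈ F, ∀ x ∈ s, f x = if σ x then 1 else -1

/-- `F` has VC dimension `V`: some set of `V` points is shattered, and every shattered
finite set has at most `V` points. -/
def VCdim {X : Type*} (F : Set (X → ℝ)) (V : ℕ) : Prop :=
  (∃ s : Finset X, s.card = V ∧ Shatters F s) ∧ ∀ s : Finset X, Shatters F s → s.card ≤ V

/-!
Write `m = min c (1 - c)`. On a shattered set of `V` points put mass `p` on all points but one, the
remaining mass on the last one, and consider the posteriors `c ± h'`, one for each sign pattern.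
The regret of a classifier is the `|η - c|`-weighted mass of the points where it differs from the
Bayes classifier, so a learner pays `p h'` for every light point whose sign it gets wrong.

Flipping the sign at a light point lowers the Hellinger affinity of the two sample laws by at most
`2 p h'² / m`. Affinities multiply over independent samples, so for `8 n p h'² ≤ m` Bernoulli's
inequality keeps the affinity of the `n`-fold products above `3/4`, and Cauchy–Schwarz turns this
into an overlap `∑ min ≥ 1/4`. Averaging over all sign patterns (Assouad) yields one on which the
learner pays at least `V p h' / 16`. With `ρ = max √(m V / n) h`, the choice `p = m / (8 n ρ²)`,
`h' = min m ρ` gives the rate.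
-/

section Affinity

variable {T : Type*} [Fintype T] {p q : T → ℝ}

lemma sq_sum_sqrt_mul_le (hp : ∀ t, 0 ≤ p t) (hq : ∀ t, 0 ≤ q t) :
    (∑ t, √(p t * q t)) ^ 2 ≤ (∑ t, min (p t) (q t)) * (∑ t, p t + ∑ t, q t) := by
  have hmin (t : T) : 0 ≤ min (p t) (q t) := le_min (hp t) (hq t)
  have hmax (t : T) : 0 ≤ max (p t) (q t) := (hp t).trans (le_max_left _ _)
  calc (∑ t, √(p t * q t)) ^ 2
      = (∑ t, √(min (p t) (q t)) * √(max (p t) (q t))) ^ 2 := by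
        simp only [← Real.sqrt_mul (hmin _), min_mul_max]
    _ ≤ (∑ t, √(min (p t) (q t)) ^ 2) * ∑ t, √(max (p t) (q t)) ^ 2 :=
        Finset.sum_mul_sq_le_sq_mul_sq _ _ _
    _ = (∑ t, min (p t) (q t)) * ∑ t, max (p t) (q t) := by
        simp only [Real.sq_sqrt (hmin _), Real.sq_sqrt (hmax _)]
    _ ≤ (∑ t, min (p t) (q t)) * (∑ t, p t + ∑ t, q t) := by
        rw [← Finset.sum_add_distrib]
        exact mul_le_mul_of_nonneg_left
          (Finset.sum_le_sum fun t _ => max_le_add_of_nonneg (hp t) (hq t))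
          (Finset.sum_nonneg fun t _ => hmin t)

lemma sum_sqrt_prod_mul_prod (hp : ∀ t, 0 ≤ p t) (hq : ∀ t, 0 ≤ q t) (n : ℕ) :
    ∑ z : Fin n → T, √((∏ j, p (z j)) * ∏ j, q (z j)) = (∑ t, √(p t * q t)) ^ n := by
  rw [Fintype.sum_pow]
  refine Finset.sum_congr rfl fun z _ => ?_
  rw [← Finset.prod_mul_distrib, Real.sqrt_prod _ fun j _ => mul_nonneg (hp _) (hq _)]

lemma quarter_le_sum_min_prod (hp : ∀ t, 0 ≤ p t) (hq : ∀ t, 0 ≤ q t) (hp1 : ∑ t, p t = 1)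
    (hq1 : ∑ t, q t = 1) {n : ℕ} (hn : n * (1 - ∑ t, √(p t * q t)) ≤ 1 / 4) :
    1 / 4 ≤ ∑ z : Fin n → T, min (∏ j, p (z j)) (∏ j, q (z j)) := by
  have cauchy_schwarz := sq_sum_sqrt_mul_le (p := fun z : Fin n → T => ∏ j, p (z j))
    (q := fun z => ∏ j, q (z j)) (fun z => Finset.prod_nonneg fun j _ => hp _)
    (fun z => Finset.prod_nonneg fun j _ => hq _)
  rw [sum_sqrt_prod_mul_prod hp hq, ← Fintype.sum_pow, ← Fintype.sum_pow, hp1, hq1,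
    one_pow] at cauchy_schwarz
  have affinity_nonneg : 0 ≤ ∑ t, √(p t * q t) := Finset.sum_nonneg fun _ _ => Real.sqrt_nonneg _
  have bernoulli := one_add_mul_sub_le_pow (a := ∑ t, √(p t * q t)) (by linarith) n
  have : 3 / 4 ≤ (∑ t, √(p t * q t)) ^ n := by linarith
  nlinarith

end Affinity

section Assouad

variable {ι Z : Type*} [Fintype Z]

lemma sum_min_le_sum_mul_add_sum_mul {P Q e e' : Z → ℝ} (hP : ∀ z, 0 ≤ P z) (hQ : ∀ z, 0 ≤ Q z)
    (he : ∀ z, 0 ≤ e z) (he' : ∀ z, 0 ≤ e' z) (hee' : ∀ z, 1 ≤ e z + e' z) :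
    ∑ z, min (P z) (Q z) ≤ ∑ z, P z * e z + ∑ z, Q z * e' z := by
  rw [← Finset.sum_add_distrib]
  refine Finset.sum_le_sum fun z _ => ?_
  calc min (P z) (Q z) ≤ min (P z) (Q z) * (e z + e' z) :=
        le_mul_of_one_le_right (le_min (hP z) (hQ z)) (hee' z)
    _ = min (P z) (Q z) * e z + min (P z) (Q z) * e' z := mul_add _ _ _
    _ ≤ P z * e z + Q z * e' z :=
        add_le_add (mul_le_mul_of_nonneg_right (min_le_left _ _) (he z))
          (mul_le_mul_of_nonneg_right (min_le_right _ _) (he' z))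

variable [DecidableEq ι] {P : (ι → Bool) → Z → ℝ} {a : ℝ}

lemma sum_half_le_sum_sum_mul_error [Fintype ι] (hP : ∀ σ z, 0 ≤ P σ z) {i : ι}
    (ha : ∀ σ, a ≤ ∑ z, min (P σ z) (P (Function.update σ i (!σ i)) z))
    {e : Bool → Z → ℝ} (he : ∀ b z, 0 ≤ e b z) (hee : ∀ b z, 1 ≤ e b z + e (!b) z) :
    ∑ _σ : ι → Bool, a / 2 ≤ ∑ σ, ∑ z, P σ z * e (σ i) z := by
  let risk (σ : ι → Bool) : ℝ := ∑ z, P σ z * e (σ i) z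
  have flip_involutive :
      Function.Involutive fun σ : ι → Bool => Function.update σ i (!σ i) := fun σ => by simp
  have sum_risk_flip : ∑ σ, risk (Function.update σ i (!σ i)) = ∑ σ, risk σ :=
    Equiv.sum_comp flip_involutive.toPerm risk
  have two_point (σ : ι → Bool) : a ≤ risk σ + risk (Function.update σ i (!σ i)) := by
    refine (ha σ).trans ((sum_min_le_sum_mul_add_sum_mul (hP _) (hP _) (he (σ i)) (he (!σ i))
      (hee (σ i))).trans_eq ?_)
    simp only [risk, Function.update_self]
  have := Finset.sum_le_sum fun σ (_ : σ ∈ Finset.univ) => two_point σ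
  rw [Finset.sum_add_distrib, sum_risk_flip] at this
  rw [← Finset.sum_div]
  linarith

theorem exists_half_mul_sum_le_sum_mul_error [Finite ι] (hP : ∀ σ z, 0 ≤ P σ z) {S : Finset ι}
    (ha : ∀ i ∈ S, ∀ σ, a ≤ ∑ z, min (P σ z) (P (Function.update σ i (!σ i)) z))
    {v : ι → ℝ} (hv : ∀ i ∈ S, 0 ≤ v i) {e : Bool → Z → ι → ℝ} (he : ∀ b z i, 0 ≤ e b z i)
    (hee : ∀ b z i, 1 ≤ e b z i + e (!b) z i) :
    ∃ σ, a / 2 * ∑ i ∈ S, v i ≤ ∑ z, P σ z * ∑ i ∈ S, v i * e (σ i) z i := by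
  cases nonempty_fintype ι
  have average : ∑ _σ : ι → Bool, a / 2 * ∑ i ∈ S, v i
      ≤ ∑ σ, ∑ z, P σ z * ∑ i ∈ S, v i * e (σ i) z i :=
    calc ∑ _σ : ι → Bool, a / 2 * ∑ i ∈ S, v i
        = ∑ i ∈ S, v i * ∑ _σ : ι → Bool, a / 2 := by
          rw [← Finset.sum_mul, ← Finset.sum_mul, mul_comm]
      _ ≤ ∑ i ∈ S, v i * ∑ σ, ∑ z, P σ z * e (σ i) z i :=
          Finset.sum_le_sum fun i hi => mul_le_mul_of_nonneg_left
            (sum_half_le_sum_sum_mul_error hP (ha i hi) (fun b z => he b z i)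
              fun b z => hee b z i) (hv i hi)
      _ = ∑ σ, ∑ z, P σ z * ∑ i ∈ S, v i * e (σ i) z i := by
          simp only [Finset.mul_sum, mul_left_comm (P _ _)]
          rw [Finset.sum_comm]
          exact Finset.sum_congr rfl fun σ _ => Finset.sum_comm
  obtain ⟨σ, -, hσ⟩ := Finset.exists_le_of_sum_le Finset.univ_nonempty average
  exact ⟨σ, hσ⟩

end Assouad

section FiniteMixtures

variable {ι X Y : Type*} [Fintype ι] [MeasurableSpace X] [MeasurableSpace Y]

/-- The finitely supported measure putting mass `w i` at the point `u i`. The weights are real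
so that they can be used in ordinary arithmetic; negative weights count as `0`. -/
noncomputable def weightedDirac (w : ι → ℝ) (u : ι → X) : Measure X :=
  ∑ i, ENNReal.ofReal (w i) • Measure.dirac (u i)

variable {w : ι → ℝ} {u : ι → X}

instance : IsFiniteMeasure (weightedDirac w u) :=
  ⟨by simp [weightedDirac, ENNReal.sum_lt_top]⟩

lemma isProbabilityMeasure_weightedDirac (hw : ∀ i, 0 ≤ w i) (hw1 : ∑ i, w i = 1) :
    IsProbabilityMeasure (weightedDirac w u) :=
  ⟨by simp [weightedDirac, ← ENNReal.ofReal_sum_of_nonneg fun i _ => hw i, hw1]⟩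

lemma map_weightedDirac {φ : X → Y} (hφ : Measurable φ) :
    (weightedDirac w u).map φ = weightedDirac w (φ ∘ u) := by
  simp only [weightedDirac, Measure.map_finset_sum' hφ.aemeasurable, Measure.map_smul,
    Measure.map_dirac' hφ, Function.comp_apply]

lemma withDensity_weightedDirac (hw : ∀ i, 0 ≤ w i) {φ : X → ℝ} (hφ : Measurable φ) :
    (weightedDirac w u).withDensity (fun x => ENNReal.ofReal (φ x))
      = weightedDirac (fun i => w i * φ (u i)) u := by
  simp only [weightedDirac, ← Measure.sum_fintype, withDensity_sum, withDensity_smul_measure,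
    dirac_withDensity' hφ.ennreal_ofReal, smul_smul, ENNReal.ofReal_mul (hw _)]

lemma integral_weightedDirac (hw : ∀ i, 0 ≤ w i) {φ : X → ℝ} (hφ : StronglyMeasurable φ) :
    ∫ x, φ x ∂weightedDirac w u = ∑ i, w i * φ (u i) := by
  rw [weightedDirac, integral_finsetSum_measure fun i _ =>
    (integrable_dirac' hφ (by simp)).smul_measure ENNReal.ofReal_ne_top]
  simp only [integral_smul_measure, integral_dirac' φ _ hφ, ENNReal.toReal_ofReal (hw _),
    smul_eq_mul]

lemma pi_weightedDirac (hw : ∀ i, 0 ≤ w i) (n : ℕ) :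
    Measure.pi (fun _ : Fin n => weightedDirac w u)
      = weightedDirac (fun z : Fin n → ι => ∏ j, w (z j)) fun z j => u (z j) := by
  refine Measure.pi_eq fun s hs => ?_
  have dirac_box (z : Fin n → ι) : Measure.dirac (fun j => u (z j)) (Set.univ.pi s)
      = ∏ j, Measure.dirac (u (z j)) (s j) := by
    rw [Measure.dirac_apply' _ (.univ_pi hs), ← Finset.coe_univ, Set.indicator_pi_one_apply]
    exact Finset.prod_congr rfl fun j _ => (Measure.dirac_apply' _ (hs j)).symm
  simp only [weightedDirac, Measure.coe_finsetSum, Finset.sum_apply, Measure.smul_apply,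
    smul_eq_mul, dirac_box, ENNReal.ofReal_prod_of_nonneg fun _ _ => hw _, Fintype.prod_sum,
    Finset.prod_mul_distrib]

end FiniteMixtures

section CostSensitiveRegret

/-- The real number encoding a Boolean label. -/
def labelSign (b : Bool) : ℝ := if b then 1 else -1

lemma labelSign_eq_one_or (b : Bool) : labelSign b = 1 ∨ labelSign b = -1 := by
  cases b <;> simp [labelSign]

lemma one_le_measureReal_ne_labelSign_add {Ω : Type*} [MeasurableSpace Ω] (μ : Measure Ω)
    [IsProbabilityMeasure μ] (φ : Ω → ℝ) (b : Bool) :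
    1 ≤ μ.real {ω | φ ω ≠ labelSign b} + μ.real {ω | φ ω ≠ labelSign !b} := by
  have cover : {ω | φ ω ≠ labelSign b} ∪ {ω | φ ω ≠ labelSign !b} = .univ := by
    refine Set.eq_univ_of_forall fun ω => ?_
    by_cases hω : φ ω = labelSign b
    · exact .inr (by cases b <;> norm_num [hω, labelSign])
    · exact .inl hω
  simpa [cover] using measureReal_union_le (μ := μ) {ω | φ ω ≠ labelSign b}
    {ω | φ ω ≠ labelSign !b}

/-- The cost-sensitive Bayes classifier of the posterior `η`. -/
noncomputable def bayesClassifier {X : Type*} (c : ℝ) (η : X → ℝ) (x : X) : ℝ :=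
  if c ≤ η x then 1 else -1

lemma min_one_sub_pos_iff {c : ℝ} : 0 < min c (1 - c) ↔ c ∈ Set.Ioo (0 : ℝ) 1 := by
  rw [lt_min_iff, sub_pos, Set.mem_Ioo]

lemma bayesClassifier_add_mul {X : Type*} {c h : ℝ} (h0 : 0 < h) {g : X → ℝ}
    (hg1 : ∀ x, g x = 1 ∨ g x = -1) : bayesClassifier c (fun x => c + h * g x) = g := by
  ext x
  rcases hg1 x with hgx | hgx <;> simp [bayesClassifier, hgx, h0, h0.le]

lemma add_mul_mem_Icc {c h : ℝ} (h0 : 0 ≤ h) (hh : h ≤ min c (1 - c)) {y : ℝ}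
    (hy : y = 1 ∨ y = -1) : c + h * y ∈ Set.Icc (0 : ℝ) 1 := by
  obtain ⟨hhc, hhc'⟩ := le_min_iff.1 hh
  rcases hy with rfl | rfl <;> constructor <;> linarith

lemma abs_add_mul_sub {c h : ℝ} (h0 : 0 ≤ h) {y : ℝ} (hy : y = 1 ∨ y = -1) :
    |c + h * y - c| = h := by
  rcases hy with rfl | rfl <;> simp [abs_of_nonneg h0]

lemma conditional_dcost_sub_bayes {X : Type*} {c : ℝ} (η : X → ℝ) (x : X) {y : ℝ}
    (hy : y = 1 ∨ y = -1) :
    η x * (dcost c 1 y - dcost c 1 (bayesClassifier c η x))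
        + (1 - η x) * (dcost c (-1) y - dcost c (-1) (bayesClassifier c η x))
      = if y = bayesClassifier c η x then 0 else |η x - c| := by
  have hne : (1 : ℝ) ≠ -1 := by norm_num
  rcases le_or_gt c (η x) with hcη | hcη
  · rw [abs_of_nonneg (sub_nonneg.2 hcη)]
    rcases hy with rfl | rfl <;> simp [dcost, bayesClassifier, hcη, hne, hne.symm]
    ring
  · rw [abs_of_neg (sub_neg.2 hcη)]
    rcases hy with rfl | rfl <;> simp [dcost, bayesClassifier, hcη.not_ge, hne, hne.symm]
    ring

variable {X : Type*} [MeasurableSpace X] {M : Measure X} {η : X → ℝ} {c : ℝ}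

lemma isProbabilityMeasure_joint [IsProbabilityMeasure M] (hη : Measurable η)
    (hη01 : ∀ x, η x ∈ Set.Icc (0 : ℝ) 1) : IsProbabilityMeasure (joint M η) := by
  have density_sum (x : X) : ENNReal.ofReal (η x) + ENNReal.ofReal (1 - η x) = 1 := by
    rw [← ENNReal.ofReal_add (hη01 x).1 (sub_nonneg.2 (hη01 x).2), add_sub_cancel,
      ENNReal.ofReal_one]
  constructor
  rw [joint, Measure.add_apply, Measure.map_apply (by fun_prop) .univ,
    Measure.map_apply (by fun_prop) .univ]
  simp only [Set.preimage_univ, withDensity_apply _ MeasurableSet.univ, Measure.restrict_univ]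
  rw [← lintegral_add_left hη.ennreal_ofReal]
  simp [density_sum]

lemma integral_joint (hη : Measurable η) (hη01 : ∀ x, η x ∈ Set.Icc (0 : ℝ) 1)
    {φ : X × Bool → ℝ} (hφ : Integrable φ (joint M η)) :
    ∫ z, φ z ∂joint M η = ∫ x, (η x * φ (x, true) + (1 - η x) * φ (x, false)) ∂M := by
  have density {θ : X → ℝ} (hθ : Measurable θ) (hθ0 : ∀ x, 0 ≤ θ x) {b : Bool}
      (hint : Integrable φ ((M.withDensity fun x => ENNReal.ofReal (θ x)).map fun x => (x, b))) :
      Integrable (fun x => θ x * φ (x, b)) M ∧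
        ∫ z, φ z ∂(M.withDensity fun x => ENNReal.ofReal (θ x)).map (fun x => (x, b))
          = ∫ x, θ x * φ (x, b) ∂M := by
    have hb : Measurable fun x : X => (x, b) := by fun_prop
    have finite : ∀ᵐ x ∂M, ENNReal.ofReal (θ x) < ⊤ := .of_forall fun _ => ENNReal.ofReal_lt_top
    rw [integral_map hb.aemeasurable hint.aestronglyMeasurable,
      integral_withDensity_eq_integral_toReal_smul hθ.ennreal_ofReal finite]
    have := (integrable_withDensity_iff_integrable_smul' hθ.ennreal_ofReal finite).1
      (hint.comp_measurable hb)
    simpa only [ENNReal.toReal_ofReal (hθ0 _), smul_eq_mul, Function.comp_apply,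
      and_true] using this
  obtain ⟨int_true, eq_true⟩ := density hη (fun x => (hη01 x).1) hφ.left_of_add_measure
  obtain ⟨int_false, eq_false⟩ := density (hη.const_sub 1) (fun x => sub_nonneg.2 (hη01 x).2)
    hφ.right_of_add_measure
  rw [joint, integral_add_measure hφ.left_of_add_measure hφ.right_of_add_measure, eq_true,
    eq_false, integral_add int_true int_false]

lemma norm_dcost_le_one (hc : c ∈ Set.Ioo (0 : ℝ) 1) (y y' : ℝ) : ‖dcost c y y'‖ ≤ 1 := by
  obtain ⟨hc0, hc1⟩ := hc
  rw [Real.norm_eq_abs, abs_le]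
  unfold dcost
  split_ifs <;> constructor <;> linarith

lemma measurable_dcost {f : X → ℝ} (hf : Measurable f) :
    Measurable fun z : X × Bool => dcost c (if z.2 then 1 else -1) (f z.1) := by
  refine measurable_from_prod_countable_left fun b => ?_
  have hfb : MeasurableSet {x | f x = if b then 1 else -1} := hf (measurableSet_singleton _)
  have hind : Measurable fun x => if f x = (if b then 1 else -1) then (0 : ℝ) else 1 :=
    .ite hfb measurable_const measurable_const
  exact hind.mul_const ((1 - c) * (if (if b then (1 : ℝ) else -1) = 1 then 1 else 0)
    + c * (if (if b then (1 : ℝ) else -1) = -1 then 1 else 0))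

lemma norm_er_le_one (hc : c ∈ Set.Ioo (0 : ℝ) 1) (f : X → ℝ) (D : Measure (X × Bool))
    [IsProbabilityMeasure D] : ‖er c f D‖ ≤ 1 := by
  simpa [er] using norm_integral_le_of_norm_le_const (μ := D)
    (.of_forall fun z => norm_dcost_le_one hc (if z.2 then 1 else -1) (f z.1))

lemma integrable_dcost (hc : c ∈ Set.Ioo (0 : ℝ) 1) {f : X → ℝ} (hf : Measurable f)
    (D : Measure (X × Bool)) [IsFiniteMeasure D] :
    Integrable (fun z => dcost c (if z.2 then 1 else -1) (f z.1)) D :=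
  .of_bound (measurable_dcost hf).aestronglyMeasurable 1
    (.of_forall fun _ => norm_dcost_le_one hc _ _)

lemma measurable_bayesClassifier (hη : Measurable η) : Measurable (bayesClassifier c η) :=
  Measurable.ite (measurableSet_le measurable_const hη) measurable_const measurable_const

theorem er_sub_er_bayesClassifier [IsProbabilityMeasure M] (hc : c ∈ Set.Ioo (0 : ℝ) 1)
    (hη : Measurable η) (hη01 : ∀ x, η x ∈ Set.Icc (0 : ℝ) 1) {f : X → ℝ} (hf : Measurable f)
    (hf1 : ∀ x, f x = 1 ∨ f x = -1) :
    er c f (joint M η) - er c (bayesClassifier c η) (joint M η)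
      = ∫ x, (if f x = bayesClassifier c η x then 0 else |η x - c|) ∂M := by
  have := isProbabilityMeasure_joint (M := M) hη hη01
  have hint_f := integrable_dcost hc hf (joint M η)
  have hint_bayes := integrable_dcost hc (measurable_bayesClassifier (c := c) hη) (joint M η)
  rw [er, er, ← integral_sub' hint_f hint_bayes,
    integral_joint hη hη01 (hint_f.sub hint_bayes)]
  refine integral_congr_ae (.of_forall fun x => ?_)
  simpa using conditional_dcost_sub_bayes η x (hf1 x)

end CostSensitiveRegret

section Minimax

variable {X : Type*} [MeasurableSpace X] {F : Set (X → ℝ)}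

/-- Membership in the model class `Θ_{h,F}`: `M` is a marginal and `η` a posterior with margin `h`
around the cost `c`, whose Bayes classifier belongs to `F`. -/
def IsMarginModel (c h : ℝ) (F : Set (X → ℝ)) (M : Measure X) (η : X → ℝ) : Prop :=
  IsProbabilityMeasure M ∧ Measurable η ∧ (∀ x, η x ∈ Set.Icc (0 : ℝ) 1) ∧
    (∀ᵐ x ∂M, h ≤ |η x - c|) ∧ (∃ g ∈ F, ∀ x, g x = bayesClassifier c η x)

lemma isMarginModel_add_mul {M : Measure X} [IsProbabilityMeasure M] {c h₀ h : ℝ} {g : X → ℝ}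
    (hgF : g ∈ F) (hg : Measurable g) (hg1 : ∀ x, g x = 1 ∨ g x = -1) (hh₀ : h₀ ≤ h) (h0 : 0 < h)
    (hh : h ≤ min c (1 - c)) : IsMarginModel c h₀ F M fun x => c + h * g x := by
  refine ⟨‹_›, by fun_prop, fun x => add_mul_mem_Icc h0.le hh (hg1 x), .of_forall fun x => ?_,
    g, hgF, fun x => by rw [bayesClassifier_add_mul h0 hg1]⟩
  rwa [abs_add_mul_sub h0.le (hg1 x)]

variable [MeasurableSpace F] {n : ℕ}

/-- The expected regret of the learning rule `κ` on `n` samples from `joint M η`. -/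
noncomputable def expectedRegret (c : ℝ) (κ : Kernel (Fin n → X × Bool) F) (M : Measure X)
    (η : X → ℝ) : ℝ :=
  ∫ o, (∫ f : F, (er c f.1 (joint M η) - er c (bayesClassifier c η) (joint M η)) ∂(κ o))
    ∂(Measure.pi fun _ : Fin n => joint M η)

/-- The supremum of the expected regret of the learning rule `κ` over the model class `Θ_{h,F}`. -/
noncomputable def worstCaseRegret (c h : ℝ) (κ : Kernel (Fin n → X × Bool) F) : ℝ :=
  ⨆ M : Measure X, ⨆ η : X → ℝ, ⨆ _ : IsMarginModel c h F M η, expectedRegret c κ M η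

/-- The minimax regret `R*` over learning rules on `n` samples with values in `F`. The σ-algebra
on `F` is a parameter. -/
noncomputable def minimaxRegret (c h : ℝ) (F : Set (X → ℝ)) [MeasurableSpace F] (n : ℕ) : ℝ :=
  ⨅ κ : {κ : Kernel (Fin n → X × Bool) F // IsMarkovKernel κ}, worstCaseRegret c h κ.1

variable {c h : ℝ} {κ : Kernel (Fin n → X × Bool) F} [IsMarkovKernel κ]
  {M : Measure X} {η : X → ℝ}

lemma expectedRegret_le_two [IsProbabilityMeasure M] (hc : c ∈ Set.Ioo (0 : ℝ) 1)
    (hη : Measurable η) (hη01 : ∀ x, η x ∈ Set.Icc (0 : ℝ) 1) : expectedRegret c κ M η ≤ 2 := by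
  have := isProbabilityMeasure_joint (M := M) hη hη01
  have regret_le (f : F) :
      ‖er c f.1 (joint M η) - er c (bayesClassifier c η) (joint M η)‖ ≤ 2 := by
    refine (norm_sub_le _ _).trans ?_
    linarith [norm_er_le_one hc f.1 (joint M η),
      norm_er_le_one hc (bayesClassifier c η) (joint M η)]
  have conditional_le (o : Fin n → X × Bool) :
      ‖∫ f : F, (er c f.1 (joint M η) - er c (bayesClassifier c η) (joint M η)) ∂(κ o)‖ ≤ 2 := by
    simpa using norm_integral_le_of_norm_le_const (μ := κ o) (.of_forall regret_le)
  refine (Real.le_norm_self _).trans ?_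
  simpa [expectedRegret] using norm_integral_le_of_norm_le_const
    (μ := Measure.pi fun _ : Fin n => joint M η) (.of_forall conditional_le)

lemma expectedRegret_le_worstCaseRegret (hc : c ∈ Set.Ioo (0 : ℝ) 1)
    (hM : IsMarginModel c h F M η) : expectedRegret c κ M η ≤ worstCaseRegret c h κ := by
  have model_le_two (M : Measure X) (η : X → ℝ) :
      ⨆ _ : IsMarginModel c h F M η, expectedRegret c κ M η ≤ 2 := by
    refine Real.iSup_le (fun hM => ?_) zero_le_two
    have := hM.1
    exact expectedRegret_le_two hc hM.2.1 hM.2.2.1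
  have marginal_le_two (M : Measure X) :
      ⨆ η : X → ℝ, ⨆ _ : IsMarginModel c h F M η, expectedRegret c κ M η ≤ 2 :=
    Real.iSup_le (model_le_two M) zero_le_two
  calc expectedRegret c κ M η
      = ⨆ _ : IsMarginModel c h F M η, expectedRegret c κ M η := by rw [ciSup_pos hM]
    _ ≤ ⨆ η : X → ℝ, ⨆ _ : IsMarginModel c h F M η, expectedRegret c κ M η :=
        le_ciSup (f := fun η => ⨆ _ : IsMarginModel c h F M η, expectedRegret c κ M η)
          ⟨2, Set.forall_mem_range.2 (model_le_two M)⟩ η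
    _ ≤ worstCaseRegret c h κ :=
        le_ciSup (f := fun M => ⨆ η, ⨆ _ : IsMarginModel c h F M η, expectedRegret c κ M η)
          ⟨2, Set.forall_mem_range.2 marginal_le_two⟩ M

end Minimax

section JointMass

variable {ι : Type*}

/-- The mass at `(i, b)` of the law on `ι × Bool` with marginal weights `w` and posterior
probabilities `θ`; the finite counterpart of `joint`. -/
def jointMass (w θ : ι → ℝ) (t : ι × Bool) : ℝ := w t.1 * if t.2 then θ t.1 else 1 - θ t.1

variable {w θ : ι → ℝ}

lemma jointMass_nonneg (hw : ∀ i, 0 ≤ w i) (hθ : ∀ i, θ i ∈ Set.Icc (0 : ℝ) 1) (t : ι × Bool) :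
    0 ≤ jointMass w θ t := by
  refine mul_nonneg (hw _) ?_
  split_ifs
  · exact (hθ _).1
  · exact sub_nonneg.2 (hθ _).2

variable [Fintype ι]

lemma sum_jointMass : ∑ t, jointMass w θ t = ∑ i, w i := by
  simp only [Fintype.sum_prod_type, Fintype.sum_bool, jointMass, if_true, Bool.false_eq_true,
    if_false, ← mul_add, add_sub_cancel, mul_one]

lemma joint_weightedDirac {X : Type*} [MeasurableSpace X] (hw : ∀ i, 0 ≤ w i) {u : ι → X}
    {η : X → ℝ} (hη : Measurable η) :
    joint (weightedDirac w u) η = weightedDirac (jointMass w (η ∘ u)) (Prod.map u id) := by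
  rw [joint, withDensity_weightedDirac hw hη, withDensity_weightedDirac hw (hη.const_sub 1),
    map_weightedDirac (by fun_prop), map_weightedDirac (by fun_prop)]
  simp [weightedDirac, Fintype.sum_prod_type, Finset.sum_add_distrib, jointMass]

lemma sum_sqrt_jointMass_mul (hw : ∀ i, 0 ≤ w i) (θ θ' : ι → ℝ) :
    ∑ t, √(jointMass w θ t * jointMass w θ' t)
      = ∑ i, w i * (√(θ i * θ' i) + √((1 - θ i) * (1 - θ' i))) := by
  have sqrt_term (i : ι) (a b : ℝ) : √(w i * a * (w i * b)) = w i * √(a * b) := by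
    rw [mul_mul_mul_comm, Real.sqrt_mul (mul_self_nonneg _), Real.sqrt_mul_self (hw i)]
  simp only [Fintype.sum_prod_type, Fintype.sum_bool, jointMass, if_true, Bool.false_eq_true,
    if_false, sqrt_term, mul_add]

end JointMass

section Hypercube

variable {ι : Type*}

/-- The posterior `c ± h` attached to the vertex `σ` of the hypercube `{−1,1}^ι`. -/
noncomputable def cubePosterior (c h : ℝ) (σ : ι → Bool) (i : ι) : ℝ := c + h * labelSign (σ i)

variable {c h : ℝ}

lemma cubePosterior_mem_Icc (h0 : 0 ≤ h) (hh : h ≤ min c (1 - c)) (σ : ι → Bool) (i : ι) :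
    cubePosterior c h σ i ∈ Set.Icc (0 : ℝ) 1 :=
  add_mul_mem_Icc h0 hh (labelSign_eq_one_or _)

lemma sub_sq_div_le_sqrt {m a : ℝ} (hm : 0 < m) (hma : m ≤ a) (h0 : 0 ≤ h) (hh : h ≤ m) :
    a - h ^ 2 / m ≤ √(a ^ 2 - h ^ 2) := by
  have hq : h ^ 2 / m ≤ m := (div_le_iff₀ hm).2 (by nlinarith)
  have hq' : h ^ 2 = m * (h ^ 2 / m) := by field_simp
  refine Real.le_sqrt_of_sq_le ?_
  nlinarith [div_nonneg (sq_nonneg h) hm.le]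

lemma one_sub_le_affinity_flip (h0 : 0 < h) (hh : h ≤ min c (1 - c)) (b : Bool) :
    1 - 2 * h ^ 2 / min c (1 - c) ≤ √((c + h * labelSign b) * (c + h * labelSign !b))
      + √((1 - (c + h * labelSign b)) * (1 - (c + h * labelSign !b))) := by
  have hm : 0 < min c (1 - c) := h0.trans_le hh
  have prod_pos_label : (c + h * labelSign b) * (c + h * labelSign !b) = c ^ 2 - h ^ 2 := by
    cases b <;> simp [labelSign] <;> ring
  have prod_neg_label : (1 - (c + h * labelSign b)) * (1 - (c + h * labelSign !b))
      = (1 - c) ^ 2 - h ^ 2 := by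
    cases b <;> simp [labelSign] <;> ring
  rw [prod_pos_label, prod_neg_label]
  calc 1 - 2 * h ^ 2 / min c (1 - c)
      = (c - h ^ 2 / min c (1 - c)) + (1 - c - h ^ 2 / min c (1 - c)) := by ring
    _ ≤ _ := add_le_add (sub_sq_div_le_sqrt hm (min_le_left _ _) h0.le hh)
        (sub_sq_div_le_sqrt hm (min_le_right _ _) h0.le hh)

variable [Fintype ι] [DecidableEq ι] {w : ι → ℝ}

lemma sum_sub_affinity_update_le (hw : ∀ i, 0 ≤ w i) (h0 : 0 < h)
    (hh : h ≤ min c (1 - c)) (σ : ι → Bool) (i : ι) :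
    ∑ k, w k - ∑ t, √(jointMass w (cubePosterior c h σ) t
        * jointMass w (cubePosterior c h (Function.update σ i (!σ i))) t)
      ≤ w i * (2 * h ^ 2 / min c (1 - c)) := by
  rw [sum_sqrt_jointMass_mul hw, ← Finset.sum_sub_distrib]
  have term_eq_zero (k : ι) (hk : k ≠ i) :
      w k - w k * (√(cubePosterior c h σ k
          * cubePosterior c h (Function.update σ i (!σ i)) k)
        + √((1 - cubePosterior c h σ k)
          * (1 - cubePosterior c h (Function.update σ i (!σ i)) k))) = 0 := by
    have hmem := cubePosterior_mem_Icc h0.le hh σ k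
    have heq : cubePosterior c h (Function.update σ i (!σ i)) k = cubePosterior c h σ k := by
      simp only [cubePosterior, Function.update_of_ne hk]
    rw [heq, Real.sqrt_mul_self hmem.1, Real.sqrt_mul_self (sub_nonneg.2 hmem.2)]
    ring
  rw [Fintype.sum_eq_single i term_eq_zero]
  simp only [cubePosterior, Function.update_self]
  have := mul_le_mul_of_nonneg_left (one_sub_le_affinity_flip h0 hh (σ i)) (hw i)
  linarith

lemma quarter_le_overlap_update (hw : ∀ i, 0 ≤ w i) (hw1 : ∑ i, w i = 1) (h0 : 0 < h)
    (hh : h ≤ min c (1 - c)) {n : ℕ} {i : ι}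
    (hi : 8 * (n * w i * h ^ 2) ≤ min c (1 - c)) (σ : ι → Bool) :
    1 / 4 ≤ ∑ z : Fin n → ι × Bool, min (∏ j, jointMass w (cubePosterior c h σ) (z j))
      (∏ j, jointMass w (cubePosterior c h (Function.update σ i (!σ i))) (z j)) := by
  have hm : 0 < min c (1 - c) := h0.trans_le hh
  have hmass (τ : ι → Bool) (t : ι × Bool) : 0 ≤ jointMass w (cubePosterior c h τ) t :=
    jointMass_nonneg hw (cubePosterior_mem_Icc h0.le hh τ) t
  refine quarter_le_sum_min_prod (hmass _) (hmass _) (sum_jointMass.trans hw1)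
    (sum_jointMass.trans hw1) ?_
  have affinity_deficit := sum_sub_affinity_update_le hw h0 hh σ i
  rw [hw1] at affinity_deficit
  calc n * _ ≤ n * (w i * (2 * h ^ 2 / min c (1 - c))) :=
        mul_le_mul_of_nonneg_left affinity_deficit n.cast_nonneg
    _ = 2 * (n * w i * h ^ 2) / min c (1 - c) := by ring
    _ ≤ 1 / 4 := (div_le_iff₀ hm).2 (by linarith)

end Hypercube

lemma exists_weights_eq_on {ι : Type*} [Fintype ι] [Nontrivial ι] {p : ℝ} (hp : 0 ≤ p)
    (hp1 : Fintype.card ι * p ≤ 1) :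
    ∃ (w : ι → ℝ) (S : Finset ι), (∀ i, 0 ≤ w i) ∧ ∑ i, w i = 1 ∧ (∀ i ∈ S, w i = p) ∧
      (Fintype.card ι : ℝ) / 2 ≤ S.card := by
  classical
  obtain ⟨i₀⟩ := (inferInstance : Nonempty ι)
  have two_le_card : (2 : ℝ) ≤ Fintype.card ι := by exact_mod_cast Fintype.one_lt_card (α := ι)
  have card_erase : ((Finset.univ.erase i₀).card : ℝ) = Fintype.card ι - 1 := by
    rw [Finset.cast_card_erase_of_mem (Finset.mem_univ i₀), Finset.card_univ]
  have eq_on (i : ι) (hi : i ∈ Finset.univ.erase i₀) :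
      Function.update (fun _ => p) i₀ (1 - (Fintype.card ι - 1) * p) i = p :=
    Function.update_of_ne (Finset.ne_of_mem_erase hi) _ _
  refine ⟨Function.update (fun _ => p) i₀ (1 - (Fintype.card ι - 1) * p),
    Finset.univ.erase i₀, fun i => ?_, ?_, eq_on, by rw [card_erase]; linarith⟩
  · rcases eq_or_ne i i₀ with rfl | hi
    · rw [Function.update_self]
      linarith
    · rwa [Function.update_of_ne hi]
  · rw [← Finset.add_sum_erase _ _ (Finset.mem_univ i₀), Finset.sum_congr rfl eq_on,
      Function.update_self, Finset.sum_const, nsmul_eq_mul, card_erase]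
    ring

section LowerBound

variable {X ι : Type*} [MeasurableSpace X] [Fintype ι] {F : Set (X → ℝ)} [MeasurableSpace F]
  {c h : ℝ} {n : ℕ} {κ : Kernel (Fin n → X × Bool) F} [IsMarkovKernel κ] {w : ι → ℝ} {u : ι → X}

lemma integral_regret_weightedDirac (hc : c ∈ Set.Ioo (0 : ℝ) 1) (hw : ∀ i, 0 ≤ w i)
    (hw1 : ∑ i, w i = 1) {η : X → ℝ} (hη : Measurable η) (hη01 : ∀ x, η x ∈ Set.Icc (0 : ℝ) 1)
    (hFm : ∀ f ∈ F, Measurable f) (hF1 : ∀ f ∈ F, ∀ x, f x = 1 ∨ f x = -1)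
    (heval : ∀ x, Measurable fun f : F => f.1 x) (μ : Measure F) [IsFiniteMeasure μ] :
    ∫ f : F, (er c f.1 (joint (weightedDirac w u) η)
        - er c (bayesClassifier c η) (joint (weightedDirac w u) η)) ∂μ
      = ∑ i, w i * |η (u i) - c| * μ.real {f | f.1 (u i) ≠ bayesClassifier c η (u i)} := by
  have := isProbabilityMeasure_weightedDirac (u := u) hw hw1
  have hdis (i : ι) : MeasurableSet {f : F | f.1 (u i) ≠ bayesClassifier c η (u i)} :=
    (heval (u i) (measurableSet_singleton _)).compl
  have regret_eq (f : F) : er c f.1 (joint (weightedDirac w u) η)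
        - er c (bayesClassifier c η) (joint (weightedDirac w u) η)
      = ∑ i, w i * |η (u i) - c|
        * {f : F | f.1 (u i) ≠ bayesClassifier c η (u i)}.indicator 1 f := by
    have hmeas : Measurable fun x => if f.1 x = bayesClassifier c η x then 0 else |η x - c| :=
      .ite (measurableSet_eq_fun (hFm _ f.2) (measurable_bayesClassifier hη)) measurable_const
        (by fun_prop)
    rw [er_sub_er_bayesClassifier hc hη hη01 (hFm _ f.2) (hF1 _ f.2),
      integral_weightedDirac hw hmeas.stronglyMeasurable]
    refine Finset.sum_congr rfl fun i _ => ?_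
    by_cases hfi : f.1 (u i) = bayesClassifier c η (u i) <;> simp [hfi]
  have hint (i : ι) : Integrable (fun f => w i * |η (u i) - c|
      * {f : F | f.1 (u i) ≠ bayesClassifier c η (u i)}.indicator (1 : F → ℝ) f) μ :=
    ((integrable_const (1 : ℝ)).indicator (hdis i)).const_mul _
  simp only [regret_eq]
  rw [integral_finsetSum _ fun i _ => hint i]
  simp only [integral_const_mul, integral_indicator_one (hdis _)]

lemma expectedRegret_weightedDirac (hc : c ∈ Set.Ioo (0 : ℝ) 1) (hw : ∀ i, 0 ≤ w i)
    (hw1 : ∑ i, w i = 1) {η : X → ℝ} (hη : Measurable η) (hη01 : ∀ x, η x ∈ Set.Icc (0 : ℝ) 1)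
    (hFm : ∀ f ∈ F, Measurable f) (hF1 : ∀ f ∈ F, ∀ x, f x = 1 ∨ f x = -1)
    (heval : ∀ x, Measurable fun f : F => f.1 x) :
    expectedRegret c κ (weightedDirac w u) η
      = ∑ z : Fin n → ι × Bool, (∏ j, jointMass w (η ∘ u) (z j)) * ∑ i, w i * |η (u i) - c|
        * (κ fun j => Prod.map u id (z j)).real {f | f.1 (u i) ≠ bayesClassifier c η (u i)} := by
  have hdis (i : ι) : MeasurableSet {f : F | f.1 (u i) ≠ bayesClassifier c η (u i)} :=
    (heval (u i) (measurableSet_singleton _)).compl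
  have hmass (t : ι × Bool) : 0 ≤ jointMass w (η ∘ u) t :=
    jointMass_nonneg hw (fun i => hη01 (u i)) t
  have hmeas : Measurable fun o => ∑ i, w i * |η (u i) - c|
      * (κ o).real {f | f.1 (u i) ≠ bayesClassifier c η (u i)} :=
    Finset.measurable_sum _ fun i _ => (κ.measurable_coe (hdis i)).ennreal_toReal.const_mul _
  simp only [expectedRegret, integral_regret_weightedDirac hc hw hw1 hη hη01 hFm hF1 heval]
  rw [joint_weightedDirac hw hη, pi_weightedDirac hmass,
    integral_weightedDirac (fun z => Finset.prod_nonneg fun j _ => hmass _)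
      hmeas.stronglyMeasurable]

lemma expectedRegret_add_mul (hw : ∀ i, 0 ≤ w i) (hw1 : ∑ i, w i = 1) (h0 : 0 < h)
    (hh : h ≤ min c (1 - c)) (hFm : ∀ f ∈ F, Measurable f)
    (hF1 : ∀ f ∈ F, ∀ x, f x = 1 ∨ f x = -1) (heval : ∀ x, Measurable fun f : F => f.1 x)
    {g : X → ℝ} (hgF : g ∈ F) {σ : ι → Bool} (hgu : ∀ i, g (u i) = labelSign (σ i)) :
    expectedRegret c κ (weightedDirac w u) (fun x => c + h * g x)
      = ∑ z : Fin n → ι × Bool, (∏ j, jointMass w (cubePosterior c h σ) (z j))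
        * ∑ i, w i * h
          * (κ fun j => Prod.map u id (z j)).real {f | f.1 (u i) ≠ labelSign (σ i)} := by
  have hc : c ∈ Set.Ioo (0 : ℝ) 1 := min_one_sub_pos_iff.1 (h0.trans_le hh)
  have hg := hFm g hgF
  have posterior_comp : (fun x => c + h * g x) ∘ u = cubePosterior c h σ :=
    funext fun i => by simp only [Function.comp_apply, hgu, cubePosterior]
  rw [expectedRegret_weightedDirac hc hw hw1 (by fun_prop)
    (fun x => add_mul_mem_Icc h0.le hh (hF1 g hgF x)) hFm hF1 heval,
    bayesClassifier_add_mul h0 (hF1 g hgF), posterior_comp]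
  simp only [hgu, abs_add_mul_sub h0.le (labelSign_eq_one_or _)]

lemma exists_le_expectedRegret_add_mul (hw : ∀ i, 0 ≤ w i) (hw1 : ∑ i, w i = 1) (h0 : 0 < h)
    (hh : h ≤ min c (1 - c)) (hFm : ∀ f ∈ F, Measurable f)
    (hF1 : ∀ f ∈ F, ∀ x, f x = 1 ∨ f x = -1) (heval : ∀ x, Measurable fun f : F => f.1 x)
    {g : (ι → Bool) → X → ℝ} (hgF : ∀ σ, g σ ∈ F) (hgu : ∀ σ i, g σ (u i) = labelSign (σ i))
    {S : Finset ι} (hS : ∀ i ∈ S, 8 * (n * w i * h ^ 2) ≤ min c (1 - c)) :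
    ∃ σ, (∑ i ∈ S, w i * h) / 8
      ≤ expectedRegret c κ (weightedDirac w u) fun x => c + h * g σ x := by
  classical
  let err (b : Bool) (z : Fin n → ι × Bool) (i : ι) : ℝ :=
    (κ fun j => Prod.map u id (z j)).real {f | f.1 (u i) ≠ labelSign b}
  have prod_nonneg (σ : ι → Bool) (z : Fin n → ι × Bool) :
      0 ≤ ∏ j, jointMass w (cubePosterior c h σ) (z j) :=
    Finset.prod_nonneg fun j _ => jointMass_nonneg hw (cubePosterior_mem_Icc h0.le hh σ) _
  have weight_nonneg (i : ι) : 0 ≤ w i * h := mul_nonneg (hw i) h0.le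
  obtain ⟨σ, hσ⟩ := exists_half_mul_sum_le_sum_mul_error (e := err) prod_nonneg
    (fun i hi => quarter_le_overlap_update hw hw1 h0 hh (hS i hi)) (fun i _ => weight_nonneg i)
    (fun _ _ _ => measureReal_nonneg)
    fun b z i => one_le_measureReal_ne_labelSign_add _ (fun f : F => f.1 (u i)) b
  refine ⟨σ, ?_⟩
  calc (∑ i ∈ S, w i * h) / 8
      = 1 / 4 / 2 * ∑ i ∈ S, w i * h := by ring
    _ ≤ ∑ z, (∏ j, jointMass w (cubePosterior c h σ) (z j))
          * ∑ i ∈ S, w i * h * err (σ i) z i := hσ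
    _ ≤ ∑ z, (∏ j, jointMass w (cubePosterior c h σ) (z j))
          * ∑ i, w i * h * err (σ i) z i :=
        Finset.sum_le_sum fun z _ => mul_le_mul_of_nonneg_left
          (Finset.sum_le_univ_sum_of_nonneg fun i =>
            mul_nonneg (weight_nonneg i) measureReal_nonneg) (prod_nonneg σ z)
    _ = expectedRegret c κ (weightedDirac w u) fun x => c + h * g σ x :=
        (expectedRegret_add_mul hw hw1 h0 hh hFm hF1 heval (hgF σ) (hgu σ)).symm

theorem le_worstCaseRegret_of_shatters (hFm : ∀ f ∈ F, Measurable f)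
    (hF1 : ∀ f ∈ F, ∀ x, f x = 1 ∨ f x = -1) (heval : ∀ x, Measurable fun f : F => f.1 x)
    {s : Finset X} (hs : Shatters F s) (hs2 : 2 ≤ s.card) {p : ℝ} (hp : 0 ≤ p)
    (hp1 : s.card * p ≤ 1) {h₀ : ℝ} (hh₀ : h₀ ≤ h) (h0 : 0 < h) (hh : h ≤ min c (1 - c))
    (hph : 8 * (n * p * h ^ 2) ≤ min c (1 - c)) :
    s.card * p * h / 16 ≤ worstCaseRegret c h₀ κ := by
  classical
  have hc : c ∈ Set.Ioo (0 : ℝ) 1 := min_one_sub_pos_iff.1 (h0.trans_le hh)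
  have : Nontrivial s := Fintype.one_lt_card_iff_nontrivial.1 (by rwa [Fintype.card_coe])
  choose g hgF hgs using fun σ : s → Bool => hs fun x => if hx : x ∈ s then σ ⟨x, hx⟩ else true
  have hgu (σ : s → Bool) (i : s) : g σ i = labelSign (σ i) := by
    simp [hgs σ i i.2, labelSign]
  obtain ⟨w, S, hw, hw1, hwS, hScard⟩ := exists_weights_eq_on (ι := s) hp
    (by rwa [Fintype.card_coe])
  rw [Fintype.card_coe] at hScard
  have := isProbabilityMeasure_weightedDirac (u := ((↑) : s → X)) hw hw1
  obtain ⟨σ, hσ⟩ := exists_le_expectedRegret_add_mul (κ := κ) hw hw1 h0 hh hFm hF1 heval hgF hgu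
    (S := S) fun i hi => by rwa [hwS i hi]
  calc s.card * p * h / 16 = s.card / 2 * (p * h) / 8 := by ring
    _ ≤ S.card * (p * h) / 8 := by gcongr
    _ = (∑ i ∈ S, w i * h) / 8 := by
        rw [← Finset.sum_mul, Finset.sum_congr rfl hwS, Finset.sum_const, nsmul_eq_mul, mul_assoc]
    _ ≤ expectedRegret c κ (weightedDirac w (↑)) fun x => c + h * g σ x := hσ
    _ ≤ worstCaseRegret c h₀ κ := expectedRegret_le_worstCaseRegret hc
        (isMarginModel_add_mul (hgF σ) (hFm _ (hgF σ)) (hF1 _ (hgF σ)) hh₀ h0 hh)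

end LowerBound

section Rates

variable {m a h : ℝ}

lemma min_div_max_sqrt_le (ha : 0 < a) (hh : h ≤ m) :
    min m (a / max √a h) ≤ a / max √a h ^ 2 * min m (max √a h) := by
  rcases le_total h √a with hle | hle
  · rw [max_eq_left hle, Real.div_sqrt, Real.sq_sqrt ha.le, div_self ha.ne', one_mul]
  · have h0 : 0 < h := (Real.sqrt_pos.2 ha).trans_le hle
    rw [max_eq_right hle, min_eq_right hh]
    refine (min_le_right _ _).trans_eq ?_
    field_simp

lemma mul_min_sqrt_div_le (hm0 : 0 ≤ m) (hm1 : m ≤ 1) (ha0 : 0 ≤ a) (ha1 : a ≤ 1) (hh : 0 ≤ h) :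
    m * min √a (a / h) ≤ min m (a / max √a h) := by
  have hmin : 0 ≤ min √a (a / h) := le_min (Real.sqrt_nonneg a) (div_nonneg ha0 hh)
  refine le_min ?_ ((mul_le_of_le_one_left hmin hm1).trans ?_)
  · exact mul_le_of_le_one_right hm0 ((min_le_left _ _).trans (Real.sqrt_le_one.2 ha1))
  · rcases le_total h √a with hle | hle
    · rw [max_eq_left hle, Real.div_sqrt]
      exact min_le_left _ _
    · rw [max_eq_right hle]
      exact min_le_right _ _

lemma mul_min_sqrt_mul_div_le {v n : ℝ} (hm0 : 0 ≤ m) (hm1 : m ≤ 1) (hv : 0 ≤ v) (hvn : v ≤ n)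
    (hh : 0 ≤ h) :
    m * min √(m * v / n) (m * v / (n * h)) ≤ min m (m * v / n / max √(m * v / n) h) := by
  have hn : 0 ≤ n := hv.trans hvn
  rw [← div_div]
  exact mul_min_sqrt_div_le hm0 hm1 (by positivity)
    (div_le_one_of_le₀ ((mul_le_of_le_one_left hv hm1).trans hvn) hn) hh

end Rates

section MinimaxBound

variable {X : Type*} [MeasurableSpace X] {F : Set (X → ℝ)} [MeasurableSpace F]
  {c h : ℝ} {n : ℕ} {s : Finset X}

lemma rate_le_worstCaseRegret (hFm : ∀ f ∈ F, Measurable f)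
    (hF1 : ∀ f ∈ F, ∀ x, f x = 1 ∨ f x = -1) (heval : ∀ x, Measurable fun f : F => f.1 x)
    (hs : Shatters F s) (hs2 : 2 ≤ s.card) (hc : c ∈ Set.Ioo (0 : ℝ) 1)
    (hh : h ≤ min c (1 - c)) (hn : 0 < n) (κ : Kernel (Fin n → X × Bool) F) [IsMarkovKernel κ] :
    1 / 128 * min (min c (1 - c))
        (min c (1 - c) * s.card / n / max √(min c (1 - c) * s.card / n) h)
      ≤ worstCaseRegret c h κ := by
  have hm := min_one_sub_pos_iff.2 hc
  set m := min c (1 - c)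
  set a := m * s.card / n with ha
  set ρ := max √a h
  have hn' : (0 : ℝ) < n := Nat.cast_pos.2 hn
  have hs' : (0 : ℝ) < s.card := by exact_mod_cast zero_lt_two.trans_le hs2
  have ha0 : 0 < a := by positivity
  have hρ0 : 0 < ρ := (Real.sqrt_pos.2 ha0).trans_le (le_max_left _ _)
  have ha_le : a ≤ ρ ^ 2 := (Real.sqrt_le_left hρ0.le).1 (le_max_left _ _)
  -- `n` samples cannot detect a flipped sign at a point of mass `p` when the gap is at most `ρ`,
  -- and `√a ≤ ρ` makes `s.card` such points fit into total mass one.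
  let p := m / (8 * n * ρ ^ 2)
  have card_mul_p : s.card * p = a / ρ ^ 2 / 8 := by
    simp only [p, ha]
    field_simp
  have overlap : 8 * (n * p * min m ρ ^ 2) ≤ m := by
    calc 8 * (n * p * min m ρ ^ 2) = m * (min m ρ / ρ) ^ 2 := by
          simp only [p]
          field_simp
      _ ≤ m := mul_le_of_le_one_right hm.le
          (pow_le_one₀ (by positivity) ((div_le_one hρ0).2 (min_le_right _ _)))
  calc 1 / 128 * min m (a / ρ) ≤ 1 / 128 * (a / ρ ^ 2 * min m ρ) := by
        gcongr
        exact min_div_max_sqrt_le ha0 hh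
    _ = s.card * p * min m ρ / 16 := by rw [card_mul_p]; ring
    _ ≤ worstCaseRegret c h κ :=
        le_worstCaseRegret_of_shatters hFm hF1 heval hs hs2 (by positivity)
          (by rw [card_mul_p]; linarith [(div_le_one (by positivity)).2 ha_le])
          (le_min hh (le_max_right _ _)) (lt_min hm hρ0) (min_le_left _ _) overlap

/-- With `a = min c (1 - c) |s| / n`, the rate `a / max √a h` is `min √a (a / h)` for `h > 0`,
and it stays `√a` at `h = 0`, where Lean's `a / h` is `0`. -/
theorem minimax_lower_bound_cost_sensitive_general (hFm : ∀ f ∈ F, Measurable f)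
    (hF1 : ∀ f ∈ F, ∀ x, f x = 1 ∨ f x = -1) (heval : ∀ x, Measurable fun f : F => f.1 x)
    (hs : Shatters F s) (hs2 : 2 ≤ s.card) (hc : c ∈ Set.Ioo (0 : ℝ) 1)
    (hh : h ≤ min c (1 - c)) (hn : 0 < n) :
    1 / 128 * min (min c (1 - c))
        (min c (1 - c) * s.card / n / max √(min c (1 - c) * s.card / n) h)
      ≤ minimaxRegret c h F n := by
  obtain ⟨f, hf, -⟩ := hs fun _ => true
  have : Nonempty {κ : Kernel (Fin n → X × Bool) F // IsMarkovKernel κ} :=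
    ⟨⟨.const _ (.dirac ⟨f, hf⟩), inferInstance⟩⟩
  exact le_ciInf fun ⟨κ, _⟩ => rate_le_worstCaseRegret hFm hF1 heval hs hs2 hc hh hn κ

end MinimaxBound

/-- minimax lower bound for cost-sensitive classification. There is an
absolute constant `K > 0` such that for every cost `c ∈ (0,1)`, every class `F` of
measurable `{−1,1}`-valued functions of VC dimension `V ≥ 2`, every margin
`h ∈ [0, min(c, 1−c)]` and every sample size `n ≥ V`, the minimax regret risk — the
infimum over learning rules (Markov kernels from `(X × {−1,1})ⁿ` to `F`) of the supremum
over the class `Θ_{h,F}` (distributions, described by marginal `M` and posterior `η`,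
whose Bayes classifier `f*(x) = 1` iff `η(x) ≥ c` agrees with a member of `F` and with
`|η(X) − c| ≥ h` a.s.) of the expected regret — is at least
`K · min(c,1−c) · min(√(min(c,1−c)·V/n), min(c,1−c)·V/(n·h))`. -/
theorem minimax_lower_bound_cost_sensitive :
    ∃ K : ℝ, 0 < K ∧
      ∀ (X : Type) [MeasurableSpace X] (c : ℝ), c ∈ Set.Ioo (0 : ℝ) 1 →
      ∀ F : Set (X → ℝ), (∀ f ∈ F, Measurable f) →
        (∀ f ∈ F, ∀ x, f x = 1 ∨ f x = -1) →
      ∀ V : ℕ, 2 ≤ V → VCdim F V →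
      ∀ h : ℝ, 0 ≤ h → h ≤ min c (1 - c) →
      ∀ n : ℕ, V ≤ n →
      letI : MeasurableSpace ↥F := ⊤
      (⨅ κ : {κ : Kernel (Fin n → X × Bool) ↥F // IsMarkovKernel κ},
        ⨆ M : Measure X, ⨆ η : X → ℝ,
        ⨆ _ : IsProbabilityMeasure M ∧ Measurable η ∧ (∀ x, η x ∈ Set.Icc (0 : ℝ) 1) ∧
            (∀ᵐ x ∂M, h ≤ |η x - c|) ∧
            (∃ g ∈ F, ∀ x, g x = if c ≤ η x then 1 else -1),
          ∫ o, (∫ f : ↥F,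
              (er c f.1 (joint M η)
                - er c (fun x => if c ≤ η x then (1 : ℝ) else -1) (joint M η)) ∂(κ.1 o))
            ∂(Measure.pi fun _ : Fin n => joint M η))
      ≥ K * min c (1 - c)
          * min (Real.sqrt (min c (1 - c) * V / n)) (min c (1 - c) * V / (n * h)) := by
  refine ⟨1 / 128, by norm_num, ?_⟩
  rintro X _ c hc F hFm hF1 _ hV2 ⟨⟨s, rfl, hs⟩, -⟩ h h0 hh n hn
  let _ : MeasurableSpace F := ⊤
  have hm1 : min c (1 - c) ≤ 1 := (min_le_left _ _).trans hc.2.le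
  rw [ge_iff_le, mul_assoc]
  exact (mul_le_mul_of_nonneg_left (mul_min_sqrt_mul_div_le (min_one_sub_pos_iff.2 hc).le hm1
    s.card.cast_nonneg (mod_cast hn) h0) (by norm_num)).trans
      (minimax_lower_bound_cost_sensitive_general hFm hF1 (fun _ => measurable_from_top) hs hV2 hc
        hh (by omega))
end
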